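/- Let C be a crumpled n-cube that is a closed n-cell-complement, and let X be a closed subset of Bd C. Then a standard flattening of C relative to X exists: there are a crumpled n-cube C_X ⊆ S^n with C ⊆ C_X and a homeomorphism h_X : Bd C → Bd C_X such that (C, C_X, h_X) ∈ W_n, h_X(x) = x for all x ∈ X, Bd C_X \ X is locally collared in C_X at each of its points, and there is a strong deformation retraction r : C_X → C with r ∘ h_X = id_{Bd C} and with r(y) ∈ Bd C \ X for every y ∈ C_X whose r-point-preimage r⁻¹(r(y)) contains more than one point. (Existence of standard flattenings, Section 5) -/

import Mathlib

noncomputable section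

open Metric Set unitInterval

/-- The ambient Euclidean space `ℝ^{n+1}` in which the sphere `S^n` lives. -/
abbrev Amb (n : ℕ) := EuclideanSpace ℝ (Fin (n + 1))

/-- The unit sphere `S^n` inside `ℝ^{n+1}`. -/
def Sph (n : ℕ) : Set (Amb n) := Metric.sphere 0 1

/-- A crumpled `n`-cube: the union of the image `bd` of a topological embedding of the
sphere `S^{n-1}` into `S^n` together with one of the connected components `int` of
`S^n \ bd`. -/
structure CrumpledCube (n : ℕ) where
  bd : Set (Amb n)
  int : Set (Amb n)
  bd_subset_sphere : bd ⊆ Sph n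
  exists_embedding : ∃ e : ↥(Sph (n - 1)) → Amb n,
      Continuous e ∧ Function.Injective e ∧ Set.range e = bd
  int_component : ∃ x, x ∈ Sph n \ bd ∧ int = connectedComponentIn (Sph n \ bd) x

namespace CrumpledCube

/-- The underlying set of a crumpled cube. -/
def carrier {n : ℕ} (C : CrumpledCube n) : Set (Amb n) := C.bd ∪ C.int

lemma bd_subset_carrier {n : ℕ} (C : CrumpledCube n) : C.bd ⊆ C.carrier :=
  Set.subset_union_left

end CrumpledCube

/-- `f : C → D` is a map associated with the triple `(C, D, h)`: it is continuous,
restricts to `h` on `Bd C`, and satisfies `f⁻¹(Bd D) = Bd C`. -/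
def IsAssociatedMap {n : ℕ} (C D : CrumpledCube n) (h : ↥C.bd ≃ₜ ↥D.bd)
    (f : ↥C.carrier → ↥D.carrier) : Prop :=
  Continuous f ∧
    (∀ (x : ↥C.carrier) (hx : (x : Amb n) ∈ C.bd),
      ((f x : ↥D.carrier) : Amb n) = ((h ⟨(x : Amb n), hx⟩ : ↥D.bd) : Amb n)) ∧
    (∀ x : ↥C.carrier, ((f x : ↥D.carrier) : Amb n) ∈ D.bd ↔ (x : Amb n) ∈ C.bd)

/-- The triple `(C, D, h)` belongs to the collection `𝒲_n`. -/
def MemW {n : ℕ} (C D : CrumpledCube n) (h : ↥C.bd ≃ₜ ↥D.bd) : Prop :=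
  ∃ f : ↥C.carrier → ↥D.carrier, IsAssociatedMap C D h f

/-- The image `h(T)` of a subset `T` of `Bd C` under a boundary homeomorphism
`h : Bd C → Bd D`, as a subset of the ambient space. -/
def bdImage {n : ℕ} {C D : CrumpledCube n} (h : ↥C.bd ≃ₜ ↥D.bd) (T : Set (Amb n)) :
    Set (Amb n) :=
  (fun x : ↥C.bd => ((h x : ↥D.bd) : Amb n)) '' {x : ↥C.bd | (x : Amb n) ∈ T}

/-- `T` is a homotopy taming set for the crumpled cube `C`. -/
def IsHomotopyTamingSet {n : ℕ} (C : CrumpledCube n) (T : Set (Amb n)) : Prop :=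
  T ⊆ C.bd ∧
    ∀ (m : C(I × I, ↥C.carrier)) (ε : ℝ), 0 < ε →
      ∃ m' : C(I × I, ↥C.carrier),
        (∀ x, dist (m x) (m' x) < ε) ∧ ∀ x, ((m' x : ↥C.carrier) : Amb n) ∈ T ∪ C.int

/-- `Bd C` is locally collared in `C` at the point `p`. -/
def LocallyCollaredAt {n : ℕ} (C : CrumpledCube n) (p : ↥C.carrier) : Prop :=
  ∃ N : Set ↥C.carrier, IsOpen N ∧ p ∈ N ∧
    ∃ φ : ↥N ≃ₜ ↥(N ∩ {x : ↥C.carrier | (x : Amb n) ∈ C.bd}) × ↥(Set.Ico (0 : ℝ) 1),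
      ∀ (x : ↥N) (hx : ((x : ↥C.carrier) : Amb n) ∈ C.bd),
        φ x = (⟨(x : ↥C.carrier), ⟨x.2, hx⟩⟩, ⟨0, ⟨le_rfl, zero_lt_one⟩⟩)

/-- The wild set of a crumpled cube: the points of `Bd C` at which `Bd C` fails to be
locally collared in `C`. -/
def wildSet {n : ℕ} (C : CrumpledCube n) : Set (Amb n) :=
  {p | ∃ hp : p ∈ C.bd, ¬ LocallyCollaredAt C ⟨p, C.bd_subset_carrier hp⟩}

/-- `C` is strictly wilder than `D`. -/
def StrictlyWilder {n : ℕ} (C D : CrumpledCube n) : Prop :=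
  (∃ h : ↥C.bd ≃ₜ ↥D.bd, MemW C D h) ∧ ∀ H : ↥D.bd ≃ₜ ↥C.bd, ¬ MemW D C H

/-- A crumpled `n`-cube is a closed `n`-cell-complement if the complement of its
interior in `S^n` is an `n`-cell. -/
def IsClosedCellComplement {n : ℕ} (C : CrumpledCube n) : Prop :=
  Nonempty (↥(Sph n \ C.int) ≃ₜ ↥(Metric.closedBall (0 : EuclideanSpace ℝ (Fin n)) 1))
/-- `(C_X, h_X)` is a standard flattening of the crumpled cube `C` relative to
`X ⊆ Bd C`. -/
def IsStandardFlattening {n : ℕ} (C : CrumpledCube n) (X : Set (Amb n))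
    (CX : CrumpledCube n) (hX : ↥C.bd ≃ₜ ↥CX.bd) : Prop :=
  MemW C CX hX ∧
  (∀ x : ↥C.bd, (x : Amb n) ∈ X → ((hX x : ↥CX.bd) : Amb n) = (x : Amb n)) ∧
  C.carrier ⊆ CX.carrier ∧
  (∀ (p : Amb n) (hp : p ∈ CX.bd), p ∉ X →
    LocallyCollaredAt CX ⟨p, CX.bd_subset_carrier hp⟩) ∧
  ∃ r : ↥CX.carrier → ↥CX.carrier,
    Continuous r ∧
    (∀ y, ((r y : ↥CX.carrier) : Amb n) ∈ C.carrier) ∧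
    (∀ y : ↥CX.carrier, ((y : ↥CX.carrier) : Amb n) ∈ C.carrier → r y = y) ∧
    (∃ F : C(↥CX.carrier × I, ↥CX.carrier),
      (∀ y, F (y, 0) = y) ∧ (∀ y, F (y, 1) = r y) ∧
      (∀ (y : ↥CX.carrier) (t : I), ((y : ↥CX.carrier) : Amb n) ∈ C.carrier → F (y, t) = y)) ∧
    (∀ (x : ↥C.bd) (hb : ((hX x : ↥CX.bd) : Amb n) ∈ CX.carrier),
      ((r ⟨((hX x : ↥CX.bd) : Amb n), hb⟩ : ↥CX.carrier) : Amb n) = (x : Amb n)) ∧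
    (∀ y : ↥CX.carrier, (∃ y', y' ≠ y ∧ r y' = r y) →
      ((r y : ↥CX.carrier) : Amb n) ∈ C.bd \ X)


/-! ### Brouwer's no-retraction theorem -/

section Brouwer

open MeasureTheory Filter Topology

variable {E : Type*} [NormedAddCommGroup E] [InnerProductSpace ℝ E] [FiniteDimensional ℝ E]

lemma isUnit_one_add_of_norm_lt_one (A : E →L[ℝ] E) (hA : ‖A‖ < 1) : IsUnit (1 + A) := by
  simpa using isUnit_one_sub_of_norm_lt_one (x := -A) (by simpa using hA)

lemma det_one_add_ne_zero_of_norm_lt_one (A : E →L[ℝ] E) (hA : ‖A‖ < 1) : (1 + A).det ≠ 0 := by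
  obtain ⟨u, hu⟩ := isUnit_one_add_of_norm_lt_one A hA
  have h : IsUnit ((1 + A : E →L[ℝ] E) : E →ₗ[ℝ] E) := by
    rw [← hu]
    exact u.isUnit.map (ContinuousLinearMap.toLinearMapRingHom :
      (E →L[ℝ] E) →+* (E →ₗ[ℝ] E))
  exact (LinearMap.isUnit_iff_isUnit_det _).1 h |>.ne_zero

lemma det_one_add_pos_of_norm_lt_one (A : E →L[ℝ] E) (hA : ‖A‖ < 1) : 0 < (1 + A).det := by
  by_contra! h
  have hc : ContinuousOn (fun s : ℝ => (1 + s • A).det) (Icc 0 1) :=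
    (ContinuousLinearMap.continuous_det.comp (by fun_prop)).continuousOn
  have h1 : (1 + (0 : ℝ) • A).det = 1 := by
    simp [ContinuousLinearMap.det]
  obtain ⟨s, hs, hs0⟩ := intermediate_value_Icc' zero_le_one hc
    (show (0 : ℝ) ∈ Icc _ _ by simp only [h1, one_smul]; exact ⟨h, zero_le_one⟩)
  refine det_one_add_ne_zero_of_norm_lt_one (s • A) ?_ hs0
  rw [norm_smul, Real.norm_of_nonneg hs.1]
  exact (mul_le_of_le_one_left (norm_nonneg _) hs.2).trans_lt hA

lemma Matrix.exists_polynomial_det_one_add_smul {ι : Type*} [Fintype ι] [DecidableEq ι]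
    (M : Matrix ι ι ℝ) :
    ∃ q : Polynomial ℝ, q.natDegree ≤ Fintype.card ι ∧
      ∀ t : ℝ, q.eval t = (1 + t • M).det := by
  refine ⟨_, Polynomial.natDegree_det_X_add_C_le M 1, fun t => ?_⟩
  rw [← Polynomial.coe_evalRingHom, RingHom.map_det]
  congr 1
  ext i j
  by_cases hij : i = j <;> simp [hij, add_comm] <;> exact mul_comm _ _

/-- The function `t ↦ det (1 + t A)` is polynomial of degree at most the dimension. -/
lemma exists_polynomial_det_one_add_smul (A : E →L[ℝ] E) :
    ∃ q : Polynomial ℝ, q.natDegree ≤ Module.finrank ℝ E ∧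
      ∀ t : ℝ, q.eval t = (1 + t • A).det := by
  obtain ⟨b⟩ : Nonempty (Module.Basis (Fin (Module.finrank ℝ E)) ℝ E) := ⟨Module.finBasis ℝ E⟩
  obtain ⟨M, hM⟩ : ∃ M, M = LinearMap.toMatrix b b (A : E →ₗ[ℝ] E) := ⟨_, rfl⟩
  obtain ⟨q, hq, hq'⟩ := M.exists_polynomial_det_one_add_smul
  refine ⟨q, by simpa using hq, fun t => ?_⟩
  rw [hq', ContinuousLinearMap.det, ← LinearMap.det_toMatrix b, hM, ← map_smul,
      ← LinearMap.toMatrix_one b, ← map_add]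
  rfl

/-- The perturbations `x + t g(x)` of the identity by a map `g` vanishing on the unit sphere
preserve the volume of the ball, for small `t`. -/
lemma setIntegral_det_one_add_smul_fderiv [MeasurableSpace E] [BorelSpace E]
    (μ : Measure E) [μ.IsAddHaarMeasure]
    {U : Set E} (hU : IsOpen U) (hBU : closedBall (0 : E) 1 ⊆ U) {g : E → E}
    (hg : ContDiffOn ℝ 1 g U) (hg0 : ∀ x ∈ sphere (0 : E) 1, g x = 0)
    {K : NNReal} (hK : ∀ x ∈ closedBall (0 : E) 1, ‖fderiv ℝ g x‖₊ ≤ K) {t : ℝ} (ht : 0 ≤ t)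
    (htK : t * K < 1)
    (hmaps : ∀ x ∈ closedBall (0 : E) 1, x + t • g x ∈ closedBall (0 : E) 1) :
    ∫ x in ball (0 : E) 1, (1 + t • fderiv ℝ g x).det ∂μ = μ.real (ball (0 : E) 1) := by
  have hdiff : ∀ x ∈ closedBall (0 : E) 1, ContDiffAt ℝ 1 g x := fun x hx =>
    hg.contDiffAt (hU.mem_nhds (hBU hx))
  have hlip : LipschitzOnWith K g (closedBall 0 1) :=
    (convex_closedBall 0 1).lipschitzOnWith_of_nnnorm_fderiv_le
      (fun x hx => (hdiff x hx).differentiableAt one_ne_zero) hK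
  have hsmall : ∀ x ∈ closedBall (0 : E) 1, ‖t • fderiv ℝ g x‖ < 1 := fun x hx => by
    rw [norm_smul, Real.norm_of_nonneg ht]
    exact (mul_le_mul_of_nonneg_left (by exact_mod_cast hK x hx) ht).trans_lt htK
  set f : E → E := fun x => x + t • g x with hf
  have hfd : ∀ x ∈ closedBall (0 : E) 1, HasStrictFDerivAt f (1 + t • fderiv ℝ g x) x :=
    fun x hx => (hasStrictFDerivAt_id x).add
      (((hdiff x hx).hasStrictFDerivAt one_ne_zero).const_smul t)
  have hinj : InjOn f (closedBall 0 1) := by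
    intro x hx y hy hxy
    by_contra hne
    have h1 : x - y = t • (g y - g x) := by
      simp only [hf] at hxy
      rw [smul_sub, sub_eq_sub_iff_add_eq_add, add_comm (t • g y), hxy]
    have h2 := hlip.norm_sub_le hy hx
    have h3 : ‖x - y‖ ≤ t * K * ‖x - y‖ := by
      calc ‖x - y‖ = t * ‖g y - g x‖ := by rw [h1, norm_smul, Real.norm_of_nonneg ht]
        _ ≤ t * (K * ‖y - x‖) := by gcongr
        _ = t * K * ‖x - y‖ := by rw [norm_sub_rev y x]; ring
    have h4 : 0 < ‖x - y‖ := norm_pos_iff.2 (sub_ne_zero.2 hne)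
    nlinarith
  have hopen : IsOpen (f '' ball 0 1) := by
    rw [isOpen_iff_mem_nhds]
    rintro _ ⟨x, hx, rfl⟩
    have hx' := ball_subset_closedBall hx
    rw [← (hfd x hx').map_nhds_eq_of_surj]
    · exact image_mem_map (isOpen_ball.mem_nhds hx)
    · obtain ⟨u, hu⟩ := isUnit_one_add_of_norm_lt_one _ (hsmall x hx')
      rw [LinearMap.range_eq_top]
      intro y
      refine ⟨(↑u⁻¹ : E →L[ℝ] E) y, ?_⟩
      have := congrArg (fun T : E →L[ℝ] E => T y) u.mul_inv
      rw [← hu]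
      exact this
  have hfs : ∀ x ∈ sphere (0 : E) 1, f x = x := fun x hx => by simp [hf, hg0 x hx]
  have himage : f '' ball 0 1 = ball 0 1 := by
    refine Subset.antisymm ?_ ?_
    · have h1 : f '' ball 0 1 ⊆ closedBall 0 1 := by
        rintro _ ⟨x, hx, rfl⟩
        exact hmaps x (ball_subset_closedBall hx)
      rintro _ ⟨x, hx, rfl⟩
      have hb : f x ∈ closedBall (0 : E) 1 := h1 ⟨x, hx, rfl⟩
      rcases (mem_closedBall.1 hb).lt_or_eq with h | h
      · exact h
      · exfalso
        have h2 : f (f x) = f x := hfs _ h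
        have h3 := hinj hb (ball_subset_closedBall hx) h2
        rw [h3] at h
        exact (mem_ball.1 hx).ne h
    · refine (convex_ball (0 : E) 1).isPreconnected.subset_of_closure_inter_subset hopen ?_ ?_
      · by_contra hne
        have h0 : f 0 ∈ closedBall (0 : E) 1 := hmaps 0 (by simp)
        rcases (mem_closedBall.1 h0).lt_or_eq with h | h
        · exact hne ⟨f 0, h, 0, by simp, rfl⟩
        · have h2 : f (f 0) = f 0 := hfs _ h
          have h3 := hinj h0 (by simp) h2
          rw [h3] at h
          simp at h
      · have hcl : IsClosed (f '' closedBall 0 1) :=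
          ((isCompact_closedBall _ _).image_of_continuousOn
            (fun x hx => (hfd x hx).continuousAt.continuousWithinAt)).isClosed
        rintro y ⟨hy, hyb⟩
        obtain ⟨x, hx, rfl⟩ :=
          closure_minimal (image_mono ball_subset_closedBall) hcl hy
        refine ⟨x, ?_, rfl⟩
        rcases (mem_closedBall.1 hx).lt_or_eq with h | h
        · exact h
        · rw [hfs x h] at hyb
          exact hyb
  have hvol := integral_image_eq_integral_abs_det_fderiv_smul μ
    (measurableSet_ball (x := (0 : E)) (ε := 1))
    (fun x hx => (hfd x (ball_subset_closedBall hx)).hasFDerivAt.hasFDerivWithinAt)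
    (hinj.mono ball_subset_closedBall) (fun _ => (1 : ℝ))
  rw [himage] at hvol
  rw [← setIntegral_one_eq_measureReal, hvol]
  refine setIntegral_congr_fun measurableSet_ball fun x hx => ?_
  simp [abs_of_pos (det_one_add_pos_of_norm_lt_one _ (hsmall x (ball_subset_closedBall hx)))]

/-- There is no continuously differentiable retraction of the closed unit ball onto its
boundary sphere. -/
theorem not_contDiffOn_retraction_sphere {U : Set E} (hU : IsOpen U)
    (hBU : closedBall (0 : E) 1 ⊆ U) {r : E → E} (hr : ContDiffOn ℝ 1 r U)
    (hnorm : ∀ x ∈ closedBall (0 : E) 1, ‖r x‖ = 1)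
    (hfix : ∀ x ∈ sphere (0 : E) 1, r x = x) : False := by
  borelize E
  let μ : Measure E := Measure.addHaar
  set g : E → E := fun x => r x - x with hgdef
  have hg : ContDiffOn ℝ 1 g U := hr.sub contDiffOn_id
  have hcont : ContinuousOn (fderiv ℝ g) (closedBall 0 1) :=
    (hg.continuousOn_fderiv_of_isOpen hU le_rfl).mono hBU
  obtain ⟨K₀, hK₀⟩ := (isCompact_closedBall (0 : E) 1).exists_bound_of_continuousOn hcont
  set K : NNReal := K₀.toNNReal
  have hK : ∀ x ∈ closedBall (0 : E) 1, ‖fderiv ℝ g x‖₊ ≤ K := fun x hx => by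
    rw [← NNReal.coe_le_coe]
    exact (hK₀ x hx).trans (Real.le_coe_toNNReal _)
  set N := Module.finrank ℝ E
  set v : ℕ → ℝ := fun i => 1 / ((K + 1) * (i + 1)) with hv
  have hKpos : (0 : ℝ) < K + 1 := by positivity
  have hvinj : InjOn v (Finset.range (N + 1) : Set ℕ) := by
    intro i _ j _ hij
    simp only [hv, one_div, inv_inj] at hij
    have := mul_left_cancel₀ hKpos.ne' hij
    exact_mod_cast add_right_cancel this
  have hv0 : ∀ i, 0 ≤ v i := fun i => by positivity
  have hv1 : ∀ i, v i * (K + 1) ≤ 1 := fun i => by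
    simp only [hv]
    rw [div_mul_eq_mul_div, one_mul, div_le_one (by positivity)]
    exact le_mul_of_one_le_right hKpos.le (by simp)
  have hvle : ∀ i, v i ≤ 1 := fun i => by
    have := hv1 i
    have h0 := hv0 i
    have : 0 ≤ v i * K := by positivity
    linarith [hv1 i]
  have hvK : ∀ i, v i * K < 1 := fun i => by
    have : 0 < v i := by positivity
    linarith [hv1 i]
  have hI : ∀ i, ∫ x in ball (0 : E) 1, (1 + v i • fderiv ℝ g x).det ∂μ
      = μ.real (ball (0 : E) 1) := fun i => by
    refine setIntegral_det_one_add_smul_fderiv μ hU hBU hg (fun x hx => ?_) hK (hv0 i) (hvK i) ?_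
    · simp [hgdef, hfix x hx]
    · intro x hx
      have : x + v i • g x = (1 - v i) • x + v i • r x := by
        simp only [hgdef, smul_sub, sub_smul, one_smul]; abel
      rw [this]
      exact convex_closedBall (0 : E) 1 hx (by simp [hnorm x hx]) (by linarith [hvle i]) (hv0 i)
        (by ring)
  have hintegrable : ∀ t : ℝ,
      IntegrableOn (fun x => (1 + t • fderiv ℝ g x).det) (ball (0 : E) 1) μ :=
    fun t => ((ContinuousLinearMap.continuous_det.comp_continuousOn
      (continuousOn_const.add (hcont.const_smul t))).integrableOn_compact
        (isCompact_closedBall _ _)).mono_set ball_subset_closedBall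
  have hlag : ∀ x, (1 + (1 : ℝ) • fderiv ℝ g x).det = ∑ i ∈ Finset.range (N + 1),
      (1 + v i • fderiv ℝ g x).det * (Lagrange.basis (Finset.range (N + 1)) v i).eval 1 := by
    intro x
    obtain ⟨q, hq, hqe⟩ := exists_polynomial_det_one_add_smul (fderiv ℝ g x)
    have hdeg : q.degree < (Finset.range (N + 1)).card := by
      rw [Finset.card_range]
      exact (Polynomial.degree_le_of_natDegree_le hq).trans_lt
        (by exact_mod_cast Nat.lt_succ_self N)
    rw [← hqe 1]
    conv_lhs => rw [Lagrange.eq_interpolate hvinj hdeg]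
    rw [Lagrange.interpolate_apply, Polynomial.eval_finsetSum]
    simp [hqe]
  have hone : ∫ x in ball (0 : E) 1, (1 + (1 : ℝ) • fderiv ℝ g x).det ∂μ
      = μ.real (ball (0 : E) 1) := by
    simp_rw [hlag]
    rw [integral_finsetSum _ fun i _ => (hintegrable (v i)).mul_const _]
    simp_rw [integral_mul_const, hI]
    rw [← Finset.mul_sum, ← Polynomial.eval_finsetSum, Lagrange.sum_basis hvinj (by simp)]
    simp
  have hzero : ∫ x in ball (0 : E) 1, (1 + (1 : ℝ) • fderiv ℝ g x).det ∂μ = 0 := by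
    rw [setIntegral_congr_fun (g := fun _ => 0) measurableSet_ball ?_]
    · simp
    intro x hx
    have hx' := ball_subset_closedBall hx
    have hrd : DifferentiableAt ℝ r x :=
      (hr.contDiffAt (hU.mem_nhds (hBU hx'))).differentiableAt one_ne_zero
    have hgd : fderiv ℝ g x = fderiv ℝ r x - 1 := by
      have : HasFDerivAt g (fderiv ℝ r x - 1) x := hrd.hasFDerivAt.sub (hasFDerivAt_id x)
      exact this.fderiv
    simp only [one_smul, hgd, add_sub_cancel]
    by_contra hdet
    have hu : IsUnit ((fderiv ℝ r x : E →L[ℝ] E) : E →ₗ[ℝ] E) :=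
      (LinearMap.isUnit_iff_isUnit_det _).2 (isUnit_iff_ne_zero.2 hdet)
    obtain ⟨y, hy⟩ := ((Module.End.isUnit_iff _).1 hu).2 (r x)
    have hd : HasFDerivAt (fun z => inner ℝ (r z) (r z)) _ x :=
      hrd.hasFDerivAt.inner ℝ hrd.hasFDerivAt
    have hc : HasFDerivAt (fun z => inner ℝ (r z) (r z)) (0 : E →L[ℝ] ℝ) x := by
      refine (hasFDerivAt_const (1 : ℝ) x).congr_of_eventuallyEq ?_
      filter_upwards [isOpen_ball.mem_nhds hx] with z hz
      rw [real_inner_self_eq_norm_sq, hnorm z (ball_subset_closedBall hz), one_pow]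
    have := congrArg (fun T : E →L[ℝ] ℝ => T y) (hd.unique hc)
    have hy' : fderiv ℝ r x y = r x := hy
    simp [hy', fderivInnerCLM_apply, hnorm x hx'] at this
  rw [hzero] at hone
  have : 0 < μ.real (ball (0 : E) 1) :=
    ENNReal.toReal_pos (isOpen_ball.measure_pos μ ⟨0, by simp⟩).ne' measure_ball_lt_top.ne
  exact this.ne hone

end Brouwer

/-! ### Brouwer's fixed point theorem and invariance of domain -/

section InvarianceOfDomain

open MeasureTheory Filter Topology
open scoped ContDiff

variable {E : Type*} [NormedAddCommGroup E] [InnerProductSpace ℝ E] [FiniteDimensional ℝ E]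

lemma exists_fixedPoint_of_contDiff {p : E → E} (hp : ContDiff ℝ 1 p)
    (hmaps : MapsTo p (closedBall 0 1) (closedBall 0 1)) :
    ∃ x ∈ closedBall (0 : E) 1, p x = x := by
  by_contra! hne
  set d : E → E := fun x => x - p x with hd
  set b : E → ℝ := fun x => inner ℝ x (d x) with hb
  set D : E → ℝ := fun x => b x ^ 2 + ‖d x‖ ^ 2 * (1 - ‖x‖ ^ 2) with hD
  have hdsm : ContDiff ℝ 1 d := contDiff_id.sub hp
  have hbsm : ContDiff ℝ 1 b := contDiff_id.inner ℝ hdsm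
  have hDsm : ContDiff ℝ 1 D :=
    (hbsm.pow 2).add ((hdsm.norm_sq ℝ).mul (contDiff_const.sub (contDiff_id.norm_sq ℝ)))
  have hd0 : ∀ x ∈ closedBall (0 : E) 1, 0 < ‖d x‖ ^ 2 := fun x hx => by
    have : d x ≠ 0 := sub_ne_zero.2 (hne x hx).symm
    positivity
  have hbpos : ∀ x ∈ sphere (0 : E) 1, 0 < b x := fun x hx => by
    have hx' := sphere_subset_closedBall hx
    have h1 : ‖x‖ = 1 := by simpa using hx
    have h2 : ‖p x‖ ≤ 1 := by simpa using hmaps hx'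
    have h3 := norm_sub_sq_real x (p x)
    have h4 : b x = 1 - inner ℝ x (p x) := by
      simp [hb, hd, inner_sub_right, h1]
    have h5 := hd0 x hx'
    have h6 : ‖p x‖ ^ 2 ≤ 1 := by nlinarith [norm_nonneg (p x)]
    simp only [hd] at h5
    rw [h1] at h3
    linarith
  have hDpos : ∀ x ∈ closedBall (0 : E) 1, 0 < D x := fun x hx => by
    rcases (mem_closedBall.1 hx).lt_or_eq with h | h
    · have h1 : ‖x‖ < 1 := by simpa using h
      have h2 : 0 < 1 - ‖x‖ ^ 2 := by nlinarith [norm_nonneg x]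
      have := mul_pos (hd0 x hx) h2
      have := sq_nonneg (b x)
      simp only [hD]; linarith
    · have h1 : ‖x‖ = 1 := by simpa using h
      have := hbpos x h
      simp only [hD, h1]
      nlinarith
  set s : E → ℝ := fun x => (-b x + √(D x)) / ‖d x‖ ^ 2 with hs
  set U : Set E := {x | 0 < ‖d x‖ ^ 2} ∩ {x | 0 < D x} with hU
  refine not_contDiffOn_retraction_sphere (E := E) (U := U) (r := fun x => x + s x • d x)
    ?_ ?_ ?_ ?_ ?_
  · exact (isOpen_lt continuous_const (hdsm.norm_sq ℝ).continuous).inter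
      (isOpen_lt continuous_const hDsm.continuous)
  · exact fun x hx => ⟨hd0 x hx, hDpos x hx⟩
  · refine contDiffOn_id.add (ContDiffOn.smul ?_ hdsm.contDiffOn)
    refine ContDiffOn.div ?_ (hdsm.norm_sq ℝ).contDiffOn fun x hx => (ne_of_gt hx.1)
    exact hbsm.neg.contDiffOn.add (hDsm.contDiffOn.sqrt fun x hx => (ne_of_gt hx.2))
  · intro x hx
    have h1 : ‖x + s x • d x‖ ^ 2 = 1 := by
      rw [norm_add_sq_real, norm_smul, inner_smul_right, mul_pow, Real.norm_eq_abs, sq_abs]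
      change ‖x‖ ^ 2 + 2 * (s x * b x) + s x ^ 2 * ‖d x‖ ^ 2 = 1
      have h2 : s x * ‖d x‖ ^ 2 = -b x + √(D x) := div_mul_cancel₀ _ (hd0 x hx).ne'
      have h3 : √(D x) ^ 2 = D x := Real.sq_sqrt (hDpos x hx).le
      have h4 : √(D x) = s x * ‖d x‖ ^ 2 + b x := by rw [h2]; ring
      rw [h4] at h3
      simp only [hD] at h3
      refine mul_left_cancel₀ (hd0 x hx).ne' ?_
      linear_combination h3
    exact (sq_eq_sq₀ (norm_nonneg _) zero_le_one).1 (by simpa using h1)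
  · intro x hx
    have h1 : ‖x‖ = 1 := by simpa using hx
    have h2 : s x = 0 := by
      simp only [hs, hD, h1]
      simp [Real.sqrt_sq (hbpos x hx).le]
    simp [h2]

lemma IsCompact.exists_contDiff_dist_lt {K : Set E} (hK : IsCompact K) {f : E → E}
    (hf : ContinuousOn f K) {ε : ℝ} (hε : 0 < ε) :
    ∃ p : E → E, ContDiff ℝ ∞ p ∧ ∀ x ∈ K, dist (f x) (p x) < ε := by
  obtain ⟨g, hg⟩ := ContinuousMap.exists_restrict_eq hK.isClosed
    (⟨K.domRestrict f, continuousOn_iff_continuous_domRestrict.1 hf⟩ : C(K, E))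
  have hgf : ∀ x ∈ K, g x = f x := fun x hx => congrArg (fun h : C(K, E) => h ⟨x, hx⟩) hg
  have hdense := ContinuousMap.dense_setOfPred_contDiff (E := E) (F := E) g
  rw [mem_closure_iff_nhds_basis
    (nhds_basis_uniformity uniformity_basis_dist.compactConvergenceUniformity)] at hdense
  obtain ⟨p, hp, hpg⟩ := hdense (K, ε) ⟨hK, hε⟩
  refine ⟨p, hp, fun x hx => ?_⟩
  have := hpg x hx
  rw [← hgf x hx]
  simpa [dist_comm] using this

/-- **Brouwer's fixed point theorem.** -/
theorem exists_fixedPoint_of_continuousOn_closedBall {f : E → E}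
    (hf : ContinuousOn f (closedBall 0 1))
    (hmaps : MapsTo f (closedBall 0 1) (closedBall 0 1)) :
    ∃ x ∈ closedBall (0 : E) 1, f x = x := by
  by_contra! hne
  have hB : IsCompact (closedBall (0 : E) 1) := isCompact_closedBall _ _
  obtain ⟨x₀, hx₀, hmin⟩ := hB.exists_isMinOn ⟨0, by simp⟩
    ((hf.sub continuousOn_id).norm : ContinuousOn (fun x => ‖f x - x‖) _)
  set η := ‖f x₀ - x₀‖ / 3 with hη
  have hηpos : 0 < η := by
    have := norm_pos_iff.2 (sub_ne_zero.2 (hne x₀ hx₀))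
    positivity
  obtain ⟨p, hp, hpf⟩ := hB.exists_contDiff_dist_lt hf hηpos
  have hp1 : ∀ x ∈ closedBall (0 : E) 1, ‖p x‖ ≤ 1 + η := fun x hx => by
    have h1 : ‖f x‖ ≤ 1 := by simpa using hmaps hx
    have h2 := norm_le_norm_add_norm_sub (f x) (p x)
    rw [← dist_eq_norm] at h2
    linarith [hpf x hx]
  obtain ⟨x, hx, hfix⟩ := exists_fixedPoint_of_contDiff (p := fun x => (1 + η)⁻¹ • p x)
    ((hp.of_le (by simp)).const_smul _) (fun x hx => by
      rw [mem_closedBall_zero_iff, norm_smul, Real.norm_of_nonneg (by positivity),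
        inv_mul_le_iff₀ (by positivity), mul_one]
      exact hp1 x hx)
  have h1 : p x = (1 + η) • x := by
    rw [inv_smul_eq_iff₀ (by positivity)] at hfix
    exact hfix
  have h2 : 3 * η ≤ ‖f x - x‖ := by
    have : ‖f x₀ - x₀‖ ≤ ‖f x - x‖ := hmin hx
    linarith
  have h3 : f x - x = (f x - p x) + η • x := by
    rw [h1, add_smul, one_smul]; abel
  have h4 : ‖f x - x‖ ≤ η + η := by
    rw [h3]
    refine (norm_add_le _ _).trans (add_le_add ?_ ?_)
    · rw [← dist_eq_norm]; exact (hpf x hx).le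
    · rw [norm_smul, Real.norm_of_nonneg hηpos.le]
      exact mul_le_of_le_one_right hηpos.le (by simpa using hx)
  linarith

lemma mem_interior_image_closedBall {f : E → E} (hf : ContinuousOn f (closedBall 0 1))
    (hinj : InjOn f (closedBall 0 1)) : f 0 ∈ interior (f '' closedBall 0 1) := by
  rcases subsingleton_or_nontrivial E with hE | hE
  · have : f '' closedBall 0 1 = univ :=
      eq_univ_of_forall fun y => ⟨0, by simp, Subsingleton.elim _ _⟩
    simp [this]
  by_contra hinterior
  borelize E
  have hB : IsCompact (closedBall (0 : E) 1) := isCompact_closedBall _ _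
  have hK : IsCompact (f '' closedBall 0 1) := hB.image_of_continuousOn hf
  set K := f '' closedBall 0 1 with hKdef
  obtain ⟨G, hG⟩ : ∃ G : C(E, E), ∀ x ∈ closedBall (0 : E) 1, G (f x) = x := by
    have : CompactSpace (closedBall (0 : E) 1) := isCompact_iff_compactSpace.1 hB
    have hemb : IsClosedEmbedding ((closedBall (0 : E) 1).domRestrict f) :=
      (continuousOn_iff_continuous_domRestrict.1 hf).isClosedEmbedding
        (injOn_iff_injective.1 hinj)
    obtain ⟨G, hG⟩ := ContinuousMap.exists_extension hemb
      (⟨Subtype.val, continuous_subtype_val⟩ : C(closedBall (0 : E) 1, E))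
    exact ⟨G, fun x hx => congrArg (fun h : C(closedBall (0 : E) 1, E) => h ⟨x, hx⟩) hG⟩
  have hG0 : G (f 0) = 0 := hG 0 (by simp)
  obtain ⟨η, hη, hGη⟩ := Metric.continuousAt_iff.1 (G.continuous.continuousAt (x := f 0)) (1 / 10)
    (by norm_num)
  rw [hG0] at hGη
  set ε := η / 2 with hε
  have hεpos : 0 < ε := by positivity
  obtain ⟨c, hcK, hc⟩ : ∃ c, c ∉ K ∧ dist c (f 0) < ε := by
    by_contra! h
    exact hinterior (mem_interior_iff_mem_nhds.2 (Metric.mem_nhds_iff.2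
      ⟨ε, hεpos, fun y hy => by_contra fun hyK => (h y hyK).not_gt hy⟩))
  have hnear : ∀ y, dist y c ≤ ε → ‖G y‖ < 1 / 10 := fun y hy => by
    rw [← dist_zero_right]
    refine hGη ((dist_triangle _ c _).trans_lt ?_)
    linarith
  set Φ : E → E := fun y => c + max (ε / ‖y - c‖) 1 • (y - c) with hΦ
  have hyc : ∀ y ∈ K, 0 < ‖y - c‖ := fun y hy =>
    norm_pos_iff.2 (sub_ne_zero.2 fun h => hcK (h ▸ hy))
  have hΦc : ContinuousOn Φ K := by
    refine continuousOn_const.add (ContinuousOn.smul (ContinuousOn.sup ?_ continuousOn_const) ?_)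
    · exact continuousOn_const.div (by fun_prop) fun y hy => (hyc y hy).ne'
    · fun_prop
  set S₁ := K \ ball c ε
  set S₂ := sphere c ε
  have hΦ1 : ∀ y ∈ K, ε ≤ dist y c → Φ y = y := fun y hy h => by
    have : ε / ‖y - c‖ ≤ 1 := by rwa [div_le_one (hyc y hy), ← dist_eq_norm]
    simp [hΦ, max_eq_right this]
  have hΦ2 : ∀ y ∈ K, dist y c ≤ ε → Φ y ∈ S₂ := fun y hy h => by
    have h1 : 1 ≤ ε / ‖y - c‖ := by rwa [one_le_div (hyc y hy), ← dist_eq_norm]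
    have h2 : ‖(ε / ‖y - c‖) • (y - c)‖ = ε := by
      rw [norm_smul, Real.norm_of_nonneg (by positivity), div_mul_cancel₀ _ (hyc y hy).ne']
    simpa [S₂, hΦ, max_eq_left h1, dist_eq_norm] using h2
  have hS₁ : IsCompact S₁ := hK.diff isOpen_ball
  have hS₂ : IsCompact S₂ := isCompact_sphere _ _
  obtain ⟨δ, hδ, hδG⟩ : ∃ δ > 0, ∀ y ∈ S₁, δ ≤ ‖G y‖ := by
    rcases S₁.eq_empty_or_nonempty with h | h
    · exact ⟨1, one_pos, by simp [h]⟩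
    · obtain ⟨y₀, hy₀, hmin⟩ := hS₁.exists_isMinOn h G.continuous.norm.continuousOn
      refine ⟨‖G y₀‖, norm_pos_iff.2 fun h0 => ?_, fun y hy => hmin hy⟩
      obtain ⟨⟨x, hx, rfl⟩, hy₀'⟩ := hy₀
      rw [hG x hx] at h0
      rw [h0] at hy₀'
      exact hy₀' (by rwa [mem_ball, dist_comm])
  set δ' := min δ (1 / 10) with hδ'
  have hδ'pos : 0 < δ' := lt_min hδ (by norm_num)
  obtain ⟨P, hP, hPG⟩ := (hS₁.union hS₂).exists_contDiff_dist_lt G.continuous.continuousOn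
    (half_pos hδ'pos)
  have hnull : (Measure.addHaar : Measure E) (P '' S₂) = 0 :=
    addHaar_image_eq_zero_of_differentiableOn_of_addHaar_eq_zero _
      (hP.differentiable (by simp)).differentiableOn (Measure.addHaar_sphere _ _ _)
  obtain ⟨w, hw, hwP⟩ : ∃ w ∈ ball (0 : E) (δ' / 2), w ∉ P '' S₂ := by
    by_contra! h
    exact (isOpen_ball.measure_pos (Measure.addHaar : Measure E)
      ⟨0, by simpa using hδ'pos⟩).ne' (measure_mono_null h hnull)
  rw [mem_ball_zero_iff] at hw
  have hPw : ∀ y ∈ S₁ ∪ S₂, ‖G y - (P y - w)‖ < δ' := fun y hy => by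
    have : G y - (P y - w) = (G y - P y) + w := by abel
    rw [this]
    have h1 := hPG y hy
    rw [dist_eq_norm] at h1
    linarith [norm_add_le (G y - P y) w]
  have hne : ∀ y ∈ S₁ ∪ S₂, P y - w ≠ 0 := by
    rintro y (hy | hy) h0
    · have h1 := hPw y (Or.inl hy)
      rw [h0, sub_zero] at h1
      exact absurd (hδG y hy) (not_le.2 (h1.trans_le (min_le_left _ _)))
    · exact hwP ⟨y, hy, sub_eq_zero.1 h0⟩
  have hΦS : ∀ y ∈ K, Φ y ∈ S₁ ∪ S₂ := fun y hy => by
    rcases le_total ε (dist y c) with h | h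
    · rw [hΦ1 y hy h]
      exact Or.inl ⟨hy, by simpa using h⟩
    · exact Or.inr (hΦ2 y hy h)
  obtain ⟨x, hx, hfix⟩ := exists_fixedPoint_of_continuousOn_closedBall
    (f := fun x => x - (P (Φ (f x)) - w))
    (continuousOn_id.sub ((hP.continuous.comp_continuousOn
      (hΦc.comp hf (mapsTo_image _ _))).sub continuousOn_const))
    (fun x hx => by
      have hfx : f x ∈ K := mem_image_of_mem _ hx
      have h1 := hPw _ (hΦS _ hfx)
      have h2 : δ' ≤ 1 / 10 := min_le_right _ _
      rw [mem_closedBall_zero_iff]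
      change ‖x - (P (Φ (f x)) - w)‖ ≤ 1
      rcases le_total ε (dist (f x) c) with h | h
      · rw [hΦ1 _ hfx h, hG x hx] at h1
        rw [hΦ1 _ hfx h]
        linarith
      · have h3 := hnear _ h
        have h4 := hnear _ (le_of_eq (hΦ2 _ hfx h))
        rw [hG x hx] at h3
        have h5 : x - (P (Φ (f x)) - w)
          = x - G (Φ (f x)) + (G (Φ (f x)) - (P (Φ (f x)) - w)) := by abel
        rw [h5]
        linarith [norm_add_le (x - G (Φ (f x))) (G (Φ (f x)) - (P (Φ (f x)) - w)),
          norm_sub_le x (G (Φ (f x)))])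
  exact hne _ (hΦS _ (mem_image_of_mem _ hx)) (sub_eq_self.1 hfix)

/-- **Invariance of domain.** -/
theorem isOpen_image_of_continuousOn_injOn {f : E → E} {U : Set E} (hU : IsOpen U)
    (hf : ContinuousOn f U) (hinj : InjOn f U) : IsOpen (f '' U) := by
  rw [isOpen_iff_mem_nhds]
  rintro _ ⟨x, hx, rfl⟩
  obtain ⟨r, hr, hrU⟩ := Metric.nhds_basis_closedBall.mem_iff.1 (hU.mem_nhds hx)
  have hmaps : MapsTo (fun y : E => x + r • y) (closedBall 0 1) U := fun y hy => by
    refine hrU ?_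
    rw [mem_closedBall_zero_iff] at hy
    simpa [norm_smul, abs_of_pos hr] using mul_le_of_le_one_right hr.le hy
  have h := mem_interior_image_closedBall (f := fun y => f (x + r • y))
    (hf.comp (by fun_prop) hmaps) (fun y hy z hz hyz => by
      have := hinj (hmaps hy) (hmaps hz) hyz
      simpa [hr.ne'] using this)
  simp only [smul_zero, add_zero] at h
  refine mem_of_superset (mem_interior_iff_mem_nhds.1 h) ?_
  rintro _ ⟨y, hy, rfl⟩
  exact ⟨_, hmaps hy, rfl⟩

end InvarianceOfDomain

/-! ### Invariance of domain for spheres -/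

section Sphere

open Topology

lemma Sph.fact_finrank (n : ℕ) : Fact (Module.finrank ℝ (Amb n) = n + 1) := ⟨by simp⟩

lemma Sph.locallyConnectedSpace (n : ℕ) : LocallyConnectedSpace ↥(Sph n) := by
  have := Sph.fact_finrank n
  exact ChartedSpace.locallyConnectedSpace (EuclideanSpace ℝ (Fin n)) (sphere (0 : Amb n) 1)

/-- Every point of the sphere lies in the domain of a chart onto Euclidean space. -/
lemma Sph.exists_chart {n : ℕ} (p : ↥(Sph n)) :
    ∃ c : OpenPartialHomeomorph ↥(Sph n) (EuclideanSpace ℝ (Fin n)), p ∈ c.source := by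
  have := Sph.fact_finrank n
  have hp : ‖(p : Amb n)‖ = 1 := by simpa [Sph] using p.2
  let q : sphere (0 : Amb n) 1 := ⟨-p, by simp [hp]⟩
  refine ⟨(stereographic' n q : OpenPartialHomeomorph (sphere (0 : Amb n) 1) _), ?_⟩
  rw [stereographic'_source]
  intro h
  have h1 : (p : Amb n) = -p := congrArg Subtype.val (h : p = q)
  have h2 : (2 : ℝ) • (p : Amb n) = 0 := by
    rw [two_smul]; nth_rewrite 1 [h1]; simp
  have h3 : (p : Amb n) = 0 := by simpa using h2
  simp [h3] at hp

lemma Sph.isOpen_image_of_euclidean {n : ℕ} {V : Set (EuclideanSpace ℝ (Fin n))} (hV : IsOpen V)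
    {f : EuclideanSpace ℝ (Fin n) → ↥(Sph n)} (hf : ContinuousOn f V) (hinj : InjOn f V) :
    IsOpen (f '' V) := by
  rw [isOpen_iff_mem_nhds]
  rintro _ ⟨v, hv, rfl⟩
  obtain ⟨c, hc⟩ := Sph.exists_chart (f v)
  set V' := V ∩ f ⁻¹' c.source
  have hV' : IsOpen V' := hf.isOpen_inter_preimage hV c.open_source
  have hmaps : MapsTo f V' c.source := fun x hx => hx.2
  have hopen : IsOpen ((c ∘ f) '' V') :=
    isOpen_image_of_continuousOn_injOn hV'
      (c.continuousOn.comp (hf.mono inter_subset_left) hmaps)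
      (c.injOn.comp (hinj.mono inter_subset_left) hmaps)
  have himage : f '' V' = c.symm '' ((c ∘ f) '' V') := by
    rw [image_image]
    exact image_congr fun x hx => (c.left_inv (hmaps hx)).symm
  have hfV' : IsOpen (f '' V') := by
    rw [himage]
    refine c.isOpen_image_symm_of_subset_target hopen ?_
    rintro _ ⟨x, hx, rfl⟩
    exact c.map_source (hmaps hx)
  exact Filter.mem_of_superset (hfV'.mem_nhds ⟨v, ⟨hv, hc⟩, rfl⟩) (image_mono inter_subset_left)

lemma Sph.isOpen_image_to_euclidean {n : ℕ} {W : Set ↥(Sph n)} (hW : IsOpen W)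
    {f : ↥(Sph n) → EuclideanSpace ℝ (Fin n)} (hf : ContinuousOn f W) (hinj : InjOn f W) :
    IsOpen (f '' W) := by
  rw [isOpen_iff_mem_nhds]
  rintro _ ⟨w, hw, rfl⟩
  obtain ⟨c, hc⟩ := Sph.exists_chart w
  set V := c.target ∩ c.symm ⁻¹' W
  have hV : IsOpen V := c.isOpen_inter_preimage_symm hW
  have hmaps : MapsTo c.symm V W := fun x hx => hx.2
  have hopen : IsOpen ((f ∘ c.symm) '' V) :=
    isOpen_image_of_continuousOn_injOn hV
      (hf.comp (c.continuousOn_symm.mono inter_subset_left) hmaps)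
      (hinj.comp (c.symm.injOn.mono inter_subset_left) hmaps)
  refine Filter.mem_of_superset (hopen.mem_nhds ⟨c w, ⟨c.map_source hc, ?_⟩, ?_⟩) ?_
  · simpa [c.left_inv hc] using hw
  · simp [c.left_inv hc]
  · rintro _ ⟨x, hx, rfl⟩
    exact ⟨_, hmaps hx, rfl⟩

/-- A sphere of positive dimension does not embed onto a proper subset of itself. -/
lemma Sph.surjective_of_injective {n : ℕ} (hn : 1 ≤ n) {f : ↥(Sph n) → ↥(Sph n)}
    (hf : Continuous f) (hinj : Function.Injective f) : Function.Surjective f := by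
  have hrank : 1 < Module.rank ℝ (Amb n) := by
    rw [← Module.finrank_eq_rank, finrank_euclideanSpace_fin]
    exact_mod_cast Nat.lt_succ_of_le hn
  have : PreconnectedSpace ↥(Sph n) :=
    isPreconnected_iff_preconnectedSpace.1 (isPreconnected_sphere hrank 0 1)
  have : Nonempty ↥(Sph n) := (NormedSpace.sphere_nonempty.2 zero_le_one).to_subtype
  have : CompactSpace ↥(Sph n) := isCompact_iff_compactSpace.1 (isCompact_sphere 0 1)
  have hopen : IsOpen (range f) := by
    rw [isOpen_iff_mem_nhds]
    rintro _ ⟨p, rfl⟩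
    obtain ⟨c, hc⟩ := Sph.exists_chart p
    have h := Sph.isOpen_image_of_euclidean c.open_target (hf.comp_continuousOn c.continuousOn_symm)
      (hinj.comp_injOn c.symm.injOn)
    refine Filter.mem_of_superset (h.mem_nhds ⟨c p, c.map_source hc, ?_⟩) ?_
    · simp [c.left_inv hc]
    · rintro _ ⟨x, -, rfl⟩
      exact ⟨_, rfl⟩
  exact range_eq_univ.1 (IsClopen.eq_univ ⟨(isCompact_range hf).isClosed, hopen⟩
    (range_nonempty f))

end Sphere

/-! ### Crumpled cubes whose complement is a cell -/

namespace CrumpledCube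

open Topology

variable {n : ℕ} (C : CrumpledCube n)

lemma isCompact_bd : IsCompact C.bd := by
  obtain ⟨e, he, -, hr⟩ := C.exists_embedding
  have : CompactSpace ↥(Sph (n - 1)) := isCompact_iff_compactSpace.1 (isCompact_sphere 0 1)
  exact hr ▸ isCompact_range he

lemma int_subset_sphere_diff : C.int ⊆ Sph n \ C.bd := by
  obtain ⟨x, -, h⟩ := C.int_component
  exact h ▸ connectedComponentIn_subset _ _

lemma int_subset_sphere : C.int ⊆ Sph n := fun _ hx => (C.int_subset_sphere_diff hx).1

lemma carrier_subset_sphere : C.carrier ⊆ Sph n :=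
  union_subset C.bd_subset_sphere C.int_subset_sphere

lemma notMem_bd_of_mem_int {x : Amb n} (hx : x ∈ C.int) : x ∉ C.bd :=
  (C.int_subset_sphere_diff hx).2

lemma isConnected_int : IsConnected C.int := by
  obtain ⟨x, hx, h⟩ := C.int_component
  exact h ▸ isConnected_connectedComponentIn_iff.2 hx

/-- The complement of the interior of a crumpled cube in the ambient sphere. -/
def compl : Set (Amb n) := Sph n \ C.int

lemma bd_subset_compl : C.bd ⊆ C.compl := fun _ hx =>
  ⟨C.bd_subset_sphere hx, fun h => C.notMem_bd_of_mem_int h hx⟩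

lemma isCompact_compl : IsCompact C.compl := by
  have := Sph.locallyConnectedSpace n
  obtain ⟨x, hx, h⟩ := C.int_component
  set O : Set ↥(Sph n) := Subtype.val ⁻¹' C.bdᶜ with hO
  have hOopen : IsOpen O := C.isCompact_bd.isClosed.isOpen_compl.preimage continuous_subtype_val
  have himage : Subtype.val '' O = Sph n \ C.bd := by
    ext y; simp [hO, and_comm]
  have hxO : (⟨x, hx.1⟩ : ↥(Sph n)) ∈ O := hx.2
  have hint_eq : C.int = Subtype.val '' connectedComponentIn O ⟨x, hx.1⟩ := by
    refine Subset.antisymm ?_ ?_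
    · have hsub : C.int ⊆ Subtype.val '' O := himage ▸ C.int_subset_sphere_diff
      have hpre : IsPreconnected (Subtype.val ⁻¹' C.int : Set ↥(Sph n)) := by
        refine IsInducing.subtypeVal.isPreconnected_image.1 ?_
        rw [image_preimage_eq_of_subset (by simpa using C.int_subset_sphere)]
        exact C.isConnected_int.isPreconnected
      intro y hy
      refine ⟨⟨y, C.int_subset_sphere hy⟩, hpre.subset_connectedComponentIn ?_ ?_ hy, rfl⟩
      · exact (h ▸ mem_connectedComponentIn hx : x ∈ C.int)
      · exact fun z hz => (C.int_subset_sphere_diff hz).2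
    · rw [h, ← himage]
      exact continuous_subtype_val.continuousOn.image_connectedComponentIn_subset hxO
  have hclosed : IsClosed C.compl := by
    have h1 : C.compl = Subtype.val '' (connectedComponentIn O ⟨x, hx.1⟩)ᶜ := by
      rw [compl, hint_eq]
      ext y
      simp only [mem_sdiff, mem_image, mem_compl_iff, Subtype.exists, exists_and_right,
        exists_eq_right]
      constructor
      · rintro ⟨h1, h2⟩
        exact ⟨h1, fun h3 => h2 ⟨h1, h3⟩⟩
      · rintro ⟨h1, h2⟩
        exact ⟨h1, fun ⟨_, h3⟩ => h2 h3⟩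
    rw [h1]
    exact (isClosed_sphere.isClosedEmbedding_subtypeVal.isClosed_iff_image_isClosed).1
      hOopen.connectedComponentIn.isClosed_compl
  exact (isCompact_sphere _ _).of_isClosed_subset hclosed sdiff_subset

lemma closure_int_subset : closure C.int ⊆ C.carrier := by
  intro y hy
  by_contra hyC
  have hyS : y ∈ Sph n := closure_minimal C.int_subset_sphere isClosed_sphere hy
  have hybd : y ∉ C.bd := fun h => hyC (Or.inl h)
  refine hyC (Or.inr ?_)
  obtain ⟨x, hx, h⟩ := C.int_component
  have hxint : x ∈ C.int := h ▸ mem_connectedComponentIn hx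
  have hpre : IsPreconnected (insert y C.int) :=
    C.isConnected_int.isPreconnected.subset_closure (subset_insert _ _)
      (insert_subset hy subset_closure)
  have := hpre.subset_connectedComponentIn (mem_insert_of_mem _ hxint)
    (insert_subset (show y ∈ Sph n \ C.bd from ⟨hyS, hybd⟩) C.int_subset_sphere_diff)
  rw [← h] at this
  exact this (mem_insert _ _)

lemma isCompact_carrier : IsCompact C.carrier := by
  refine (isCompact_sphere (0 : Amb n) 1).of_isClosed_subset ?_ C.carrier_subset_sphere
  refine isClosed_of_closure_subset ?_
  rw [carrier, closure_union, C.isCompact_bd.isClosed.closure_eq]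
  exact union_subset subset_union_left C.closure_int_subset

lemma mem_carrier_or_mem_compl {x : Amb n} (hx : x ∈ Sph n) : x ∈ C.carrier ∨ x ∈ C.compl := by
  by_cases h : x ∈ C.int
  · exact Or.inl (Or.inr h)
  · exact Or.inr ⟨hx, h⟩

lemma mem_bd_of_mem_carrier_of_mem_compl {x : Amb n} (h₁ : x ∈ C.carrier) (h₂ : x ∈ C.compl) :
    x ∈ C.bd := h₁.resolve_right h₂.2

/-- A parametrization of the complement of a crumpled cube by the closed unit ball, with both
the parametrization and its inverse extended to the ambient spaces. -/
structure ComplChart where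
  toBall : Amb n → EuclideanSpace ℝ (Fin n)
  ofBall : EuclideanSpace ℝ (Fin n) → Amb n
  continuous_toBall : Continuous toBall
  continuous_ofBall : Continuous ofBall
  ofBall_mem : ∀ v, ofBall v ∈ C.compl
  ofBall_toBall : ∀ y ∈ C.compl, ofBall (toBall y) = y
  norm_toBall_le : ∀ y ∈ C.compl, ‖toBall y‖ ≤ 1
  toBall_ofBall : ∀ v, ‖v‖ ≤ 1 → toBall (ofBall v) = v

namespace ComplChart

variable {C} (χ : C.ComplChart)

lemma sphere_subset_closure_int {v : EuclideanSpace ℝ (Fin n)} (hv : ‖v‖ = 1) :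
    χ.ofBall v ∈ closure C.int := by
  by_contra hcl
  set W : Set ↥(Sph n) := Subtype.val ⁻¹' (closure C.int)ᶜ with hWdef
  have hW : IsOpen W := isClosed_closure.isOpen_compl.preimage continuous_subtype_val
  have hWK : ∀ w ∈ W, (w : Amb n) ∈ C.compl := fun w hw =>
    ⟨w.2, fun h => hw (subset_closure h)⟩
  have hopen := Sph.isOpen_image_to_euclidean hW (f := fun w => χ.toBall w)
    (χ.continuous_toBall.comp continuous_subtype_val).continuousOn
    (fun a ha b hb hab => Subtype.ext (by
      rw [← χ.ofBall_toBall a (hWK a ha), ← χ.ofBall_toBall b (hWK b hb)]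
      exact congrArg χ.ofBall hab))
  have hsub : (fun w : ↥(Sph n) => χ.toBall w) '' W ⊆ closedBall 0 1 := by
    rintro _ ⟨w, hw, rfl⟩
    simpa using χ.norm_toBall_le w (hWK w hw)
  have hmem : v ∈ interior (closedBall (0 : EuclideanSpace ℝ (Fin n)) 1) :=
    interior_maximal hsub hopen ⟨⟨χ.ofBall v, (χ.ofBall_mem v).1⟩, hcl,
      χ.toBall_ofBall v hv.le⟩
  rw [interior_closedBall _ one_ne_zero] at hmem
  exact (mem_ball_zero_iff.1 hmem).ne hv

lemma ofBall_mem_bd_of_norm_eq {v : EuclideanSpace ℝ (Fin n)} (hv : ‖v‖ = 1) :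
    χ.ofBall v ∈ C.bd :=
  C.mem_bd_of_mem_carrier_of_mem_compl (C.closure_int_subset (χ.sphere_subset_closure_int hv))
    (χ.ofBall_mem v)

/-- The parametrization sends the unit sphere onto the boundary of the crumpled cube. -/
lemma norm_toBall_of_mem_bd (hn : 2 ≤ n) {y : Amb n} (hy : y ∈ C.bd) : ‖χ.toBall y‖ = 1 := by
  obtain ⟨m, rfl⟩ : ∃ m, n = m + 1 := ⟨n - 1, by omega⟩
  obtain ⟨e, he, hinj, hr⟩ : ∃ e : ↥(Sph m) → Amb (m + 1), Continuous e ∧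
    Function.Injective e ∧ range e = C.bd := C.exists_embedding
  have : CompactSpace ↥(Sph m) := isCompact_iff_compactSpace.1 (isCompact_sphere 0 1)
  have hemb : IsEmbedding e := (he.isClosedEmbedding hinj).isEmbedding
  let eh := hemb.toHomeomorph
  have hmem : ∀ u : ↥(Sph m), χ.ofBall (u : Amb m) ∈ range e := fun u =>
    hr ▸ χ.ofBall_mem_bd_of_norm_eq (by simpa [Sph] using u.2)
  let k : ↥(Sph m) → ↥(Sph m) := fun u => eh.symm ⟨χ.ofBall (u : Amb m), hmem u⟩
  have hk : ∀ u, e (k u) = χ.ofBall (u : Amb m) := fun u =>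
    congrArg Subtype.val (eh.apply_symm_apply ⟨χ.ofBall (u : Amb m), hmem u⟩)
  have hkc : Continuous k := eh.symm.continuous.comp
    ((χ.continuous_ofBall.comp continuous_subtype_val).subtype_mk _)
  have hnorm : ∀ u : ↥(Sph m), ‖(u : Amb m)‖ = 1 := fun u => by simpa [Sph] using u.2
  have hki : Function.Injective k := fun a b hab => by
    have h1 : χ.ofBall (a : Amb m) = χ.ofBall (b : Amb m) := by rw [← hk, ← hk, hab]
    have h2 := congrArg χ.toBall h1
    rw [χ.toBall_ofBall _ (hnorm a).le, χ.toBall_ofBall _ (hnorm b).le] at h2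
    exact Subtype.ext h2
  have hy' : y ∈ range e := hr ▸ hy
  obtain ⟨p, rfl⟩ := hy'
  obtain ⟨u, rfl⟩ := Sph.surjective_of_injective (by omega) hkc hki p
  rw [hk, χ.toBall_ofBall _ (hnorm u).le]
  exact hnorm u

lemma bd_subset_closure_int (χ : C.ComplChart) (hn : 2 ≤ n) : C.bd ⊆ closure C.int := fun y hy => by
  rw [← χ.ofBall_toBall y (C.bd_subset_compl hy)]
  exact χ.sphere_subset_closure_int (χ.norm_toBall_of_mem_bd hn hy)

end ComplChart

lemma _root_.IsClosedCellComplement.nonempty_complChart (hC : IsClosedCellComplement C) :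
    Nonempty C.ComplChart := by
  obtain ⟨H⟩ := hC
  change ↥C.compl ≃ₜ _ at H
  obtain ⟨φ, hφ⟩ := ContinuousMap.exists_restrict_eq C.isCompact_compl.isClosed
    (⟨fun y => (H y : EuclideanSpace ℝ (Fin n)), by fun_prop⟩ : C(↥C.compl, _))
  have hφ' : ∀ y (hy : y ∈ C.compl), φ y = H ⟨y, hy⟩ := fun y hy =>
    congrArg (fun h : C(↥C.compl, EuclideanSpace ℝ (Fin n)) => h ⟨y, hy⟩) hφ
  have hball : ∀ v : EuclideanSpace ℝ (Fin n), (max ‖v‖ 1)⁻¹ • v ∈ closedBall 0 1 := fun v => by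
    rw [mem_closedBall_zero_iff, norm_smul, norm_inv, Real.norm_of_nonneg (by positivity),
      inv_mul_le_one₀ (by positivity)]
    exact le_max_left _ _
  have hcont : Continuous fun v : EuclideanSpace ℝ (Fin n) => (max ‖v‖ 1)⁻¹ • v :=
    ((continuous_norm.max continuous_const).inv₀ fun v => by positivity).smul continuous_id
  refine ⟨⟨φ, fun v => H.symm ⟨_, hball v⟩, φ.continuous,
    continuous_subtype_val.comp (H.symm.continuous.comp (hcont.subtype_mk _)),
    fun v => (H.symm ⟨_, hball v⟩).2, fun y hy => ?_, fun y hy => ?_, fun v hv => ?_⟩⟩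
  · have h1 : ‖φ y‖ ≤ 1 := by
      rw [hφ' y hy]; exact mem_closedBall_zero_iff.1 (H ⟨y, hy⟩).2
    have h2 : (⟨(max ‖φ y‖ 1)⁻¹ • φ y, hball _⟩ : closedBall (0 : EuclideanSpace ℝ (Fin n)) 1)
        = H ⟨y, hy⟩ := Subtype.ext (by
          change (max ‖φ y‖ 1)⁻¹ • φ y = _
          rw [max_eq_right h1, inv_one, one_smul, hφ' y hy])
    rw [h2, H.symm_apply_apply]
  · rw [hφ' y hy]; exact mem_closedBall_zero_iff.1 (H ⟨y, hy⟩).2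
  · rw [hφ' _ (H.symm ⟨_, hball v⟩).2]
    simp [max_eq_right hv]

end CrumpledCube

/-! ### Radial coordinates near the boundary of a cell -/

section Unitize

variable {E : Type*} [NormedAddCommGroup E] [NormedSpace ℝ E]

/-- Radial projection to the unit sphere, truncated near the origin to make it continuous. -/
def unitize (v : E) : E := (max ‖v‖ (1 / 2))⁻¹ • v

lemma continuous_unitize : Continuous (unitize : E → E) :=
  ((continuous_norm.max continuous_const).inv₀ fun _ =>
    (lt_max_of_lt_right one_half_pos).ne').smul continuous_id

lemma unitize_of_norm_eq_one {v : E} (hv : ‖v‖ = 1) : unitize v = v := by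
  rw [unitize, hv, max_eq_left one_half_lt_one.le, inv_one, one_smul]

lemma norm_unitize {v : E} (hv : 1 / 2 ≤ ‖v‖) : ‖unitize v‖ = 1 := by
  rw [unitize, max_eq_left hv, norm_smul, norm_inv, norm_norm, inv_mul_cancel₀]
  exact (one_half_pos.trans_le hv).ne'

lemma norm_smul_unitize {v : E} (hv : 1 / 2 ≤ ‖v‖) : ‖v‖ • unitize v = v := by
  rw [unitize, max_eq_left hv, smul_inv_smul₀ (one_half_pos.trans_le hv).ne']

lemma unitize_smul {v : E} (hv : ‖v‖ = 1) {s : ℝ} (hs : 1 / 2 ≤ s) : unitize (s • v) = v := by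
  have h0 : 0 < s := one_half_pos.trans_le hs
  rw [unitize, norm_smul, hv, mul_one, Real.norm_of_nonneg h0.le, max_eq_left hs,
    inv_smul_smul₀ h0.ne']

end Unitize

/-- A quarter of the distance to `X ∪ {0}`. -/
def depth {n : ℕ} (X : Set (Amb n)) (x : Amb n) : ℝ := infDist x (insert 0 X) / 4

section Depth

variable {n : ℕ} {X : Set (Amb n)}

lemma continuous_depth : Continuous (depth X) := (continuous_infDist_pt _).div_const _

lemma depth_nonneg (x : Amb n) : 0 ≤ depth X x := div_nonneg infDist_nonneg (by norm_num)

lemma four_mul_depth_le_dist {x y : Amb n} (hy : y ∈ X) : 4 * depth X x ≤ dist x y := by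
  have := infDist_le_dist_of_mem (x := x) (mem_insert_of_mem 0 hy)
  rw [depth]; linarith

lemma depth_le_quarter {x : Amb n} (hx : x ∈ Sph n) : depth X x ≤ 1 / 4 := by
  have h := infDist_le_dist_of_mem (x := x) (mem_insert 0 X)
  rw [mem_sphere.1 hx] at h
  rw [depth]; linarith

lemma depth_of_mem {x : Amb n} (hx : x ∈ X) : depth X x = 0 := by
  rw [depth, infDist_zero_of_mem (mem_insert_of_mem 0 hx), zero_div]

lemma depth_pos (hX : IsClosed X) {x : Amb n} (hx : x ∈ Sph n) (hxX : x ∉ X) :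
    0 < depth X x := by
  have hcl : IsClosed (insert 0 X) := by
    rw [insert_eq]; exact isClosed_singleton.union hX
  refine div_pos ((hcl.notMem_iff_infDist_pos (insert_nonempty _ _)).1 ?_) (by norm_num)
  rintro (rfl | h)
  · simp [Sph] at hx
  · exact hxX h

end Depth

namespace CrumpledCube.ComplChart

variable {n : ℕ} {C : CrumpledCube n} (χ : C.ComplChart)

/-- The radial coordinate on the complementary cell. -/
def radius (y : Amb n) : ℝ := ‖χ.toBall y‖

/-- The radial projection of the complementary cell to its boundary. -/
def proj (y : Amb n) : Amb n := χ.ofBall (unitize (χ.toBall y))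

/-- The point of the complementary cell with prescribed projection and radius. -/
def radial (x : Amb n) (s : ℝ) : Amb n := χ.ofBall (s • χ.toBall x)

lemma continuous_radius : Continuous χ.radius := χ.continuous_toBall.norm

lemma continuous_proj : Continuous χ.proj :=
  χ.continuous_ofBall.comp (continuous_unitize.comp χ.continuous_toBall)

lemma continuous_radial : Continuous fun p : Amb n × ℝ => χ.radial p.1 p.2 :=
  χ.continuous_ofBall.comp
    (continuous_snd.smul (χ.continuous_toBall.comp continuous_fst))

lemma radial_mem (x : Amb n) (s : ℝ) : χ.radial x s ∈ C.compl := χ.ofBall_mem _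

lemma radius_le_one {y : Amb n} (hy : y ∈ C.compl) : χ.radius y ≤ 1 := χ.norm_toBall_le y hy

lemma radius_of_mem_bd (hn : 2 ≤ n) {y : Amb n} (hy : y ∈ C.bd) : χ.radius y = 1 :=
  χ.norm_toBall_of_mem_bd hn hy

lemma proj_of_mem_bd (hn : 2 ≤ n) {y : Amb n} (hy : y ∈ C.bd) : χ.proj y = y := by
  rw [proj, unitize_of_norm_eq_one (χ.norm_toBall_of_mem_bd hn hy),
    χ.ofBall_toBall y (C.bd_subset_compl hy)]

lemma radial_one {x : Amb n} (hx : x ∈ C.compl) : χ.radial x 1 = x := by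
  rw [radial, one_smul, χ.ofBall_toBall x hx]

lemma mem_bd_of_radius_eq {y : Amb n} (hy : y ∈ C.compl) (h : χ.radius y = 1) : y ∈ C.bd := by
  rw [← χ.ofBall_toBall y hy]
  exact χ.ofBall_mem_bd_of_norm_eq h

lemma proj_mem_bd {y : Amb n} (h : 1 / 2 ≤ χ.radius y) : χ.proj y ∈ C.bd :=
  χ.ofBall_mem_bd_of_norm_eq (norm_unitize h)

lemma radial_proj {y : Amb n} (hy : y ∈ C.compl) (h : 1 / 2 ≤ χ.radius y) :
    χ.radial (χ.proj y) (χ.radius y) = y := by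
  rw [radial, proj, χ.toBall_ofBall _ (norm_unitize h).le, radius, norm_smul_unitize h,
    χ.ofBall_toBall y hy]

lemma toBall_radial (hn : 2 ≤ n) {x : Amb n} (hx : x ∈ C.bd) {s : ℝ} (hs : 0 ≤ s)
    (hs' : s ≤ 1) : χ.toBall (χ.radial x s) = s • χ.toBall x := by
  refine χ.toBall_ofBall _ ?_
  rwa [norm_smul, χ.norm_toBall_of_mem_bd hn hx, mul_one, Real.norm_of_nonneg hs]

lemma radius_radial (hn : 2 ≤ n) {x : Amb n} (hx : x ∈ C.bd) {s : ℝ} (hs : 0 ≤ s)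
    (hs' : s ≤ 1) : χ.radius (χ.radial x s) = s := by
  rw [radius, χ.toBall_radial hn hx hs hs', norm_smul, χ.norm_toBall_of_mem_bd hn hx, mul_one,
    Real.norm_of_nonneg hs]

lemma proj_radial (hn : 2 ≤ n) {x : Amb n} (hx : x ∈ C.bd) {s : ℝ} (hs : 1 / 2 ≤ s)
    (hs' : s ≤ 1) : χ.proj (χ.radial x s) = x := by
  rw [proj, χ.toBall_radial hn hx (one_half_pos.le.trans hs) hs',
    unitize_smul (χ.norm_toBall_of_mem_bd hn hx) hs, χ.ofBall_toBall x (C.bd_subset_compl hx)]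

/-- The signed height of a point of the complementary cell above the graph of
`1 - depth X` over the boundary, in radial coordinates. -/
def level (X : Set (Amb n)) (y : Amb n) : ℝ := χ.radius y - 1 + depth X (χ.proj y)

variable {X : Set (Amb n)}

lemma continuous_level : Continuous (χ.level X) :=
  (χ.continuous_radius.sub continuous_const).add (continuous_depth.comp χ.continuous_proj)

lemma proj_mem_sphere (y : Amb n) : χ.proj y ∈ Sph n := (χ.ofBall_mem _).1

lemma three_quarters_le_radius {y : Amb n} (h : 0 ≤ χ.level X y) : 3 / 4 ≤ χ.radius y := by
  have := depth_le_quarter (X := X) (χ.proj_mem_sphere y)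
  rw [level] at h; linarith

lemma half_le_radius {y : Amb n} (h : 0 ≤ χ.level X y) : 1 / 2 ≤ χ.radius y := by
  linarith [χ.three_quarters_le_radius h]

lemma level_of_mem_bd (hn : 2 ≤ n) {y : Amb n} (hy : y ∈ C.bd) : χ.level X y = depth X y := by
  rw [level, χ.radius_of_mem_bd hn hy, χ.proj_of_mem_bd hn hy]; ring

lemma level_radial (hn : 2 ≤ n) {x : Amb n} (hx : x ∈ C.bd) {s : ℝ} (hs : 1 / 2 ≤ s)
    (hs₁ : s ≤ 1) : χ.level X (χ.radial x s) = s - 1 + depth X x := by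
  rw [level, χ.radius_radial hn hx (one_half_pos.le.trans hs) hs₁, χ.proj_radial hn hx hs hs₁]

/-- The set cut out by the graph of `1 - depth X` on the side of the crumpled cube. -/
def flatInt (X : Set (Amb n)) : Set (Amb n) := C.int ∪ {y | y ∈ C.compl ∧ 0 < χ.level X y}

/-- The graph of `1 - depth X` in radial coordinates. -/
def flatBd (X : Set (Amb n)) : Set (Amb n) := {y | y ∈ C.compl ∧ χ.level X y = 0}

lemma flatInt_subset_sphere : χ.flatInt X ⊆ Sph n := by
  rintro y (hy | hy)
  · exact C.int_subset_sphere hy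
  · exact hy.1.1

lemma flatInt_subset_diff : χ.flatInt X ⊆ Sph n \ χ.flatBd X := by
  intro y hy
  refine ⟨χ.flatInt_subset_sphere hy, fun h => ?_⟩
  rcases hy with hy | hy
  · exact h.1.2 hy
  · exact hy.2.ne' h.2

lemma isPreconnected_flatInt (hn : 2 ≤ n) : IsPreconnected (χ.flatInt X) := by
  obtain ⟨x₀, hx₀⟩ := C.isConnected_int.nonempty
  refine isPreconnected_of_forall x₀ ?_
  rintro y (hy | ⟨hyK, hy⟩)
  · exact ⟨C.int, subset_union_left, hx₀, hy, C.isConnected_int.isPreconnected⟩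
  have hr := χ.half_le_radius hy.le
  have hb := χ.proj_mem_bd hr
  have hr1 := χ.radius_le_one hyK
  have hlev : ∀ s ∈ Icc (χ.radius y) 1, 0 < χ.level X (χ.radial (χ.proj y) s) := by
    intro s hs
    rw [χ.level_radial hn hb (hr.trans hs.1) hs.2]
    rw [level] at hy; linarith [hs.1]
  have hseg : IsPreconnected (χ.radial (χ.proj y) '' Icc (χ.radius y) 1) :=
    isPreconnected_Icc.image _
      (χ.continuous_radial.comp (Continuous.prodMk_right _)).continuousOn
  have hpre : IsPreconnected (insert (χ.proj y) C.int) :=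
    C.isConnected_int.isPreconnected.subset_closure (subset_insert _ _)
      (insert_subset (χ.bd_subset_closure_int hn hb) subset_closure)
  have hproj : χ.proj y ∈ χ.radial (χ.proj y) '' Icc (χ.radius y) 1 :=
    ⟨1, ⟨hr1, le_rfl⟩, χ.radial_one (C.bd_subset_compl hb)⟩
  refine ⟨insert (χ.proj y) C.int ∪ χ.radial (χ.proj y) '' Icc (χ.radius y) 1, ?_,
    Or.inl (mem_insert_of_mem _ hx₀),
    Or.inr ⟨χ.radius y, ⟨le_rfl, hr1⟩, χ.radial_proj hyK hr⟩,
    hpre.union _ (mem_insert _ _) hproj hseg⟩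
  have himage : χ.radial (χ.proj y) '' Icc (χ.radius y) 1 ⊆ χ.flatInt X := by
    rintro _ ⟨s, hs, rfl⟩
    exact Or.inr ⟨χ.radial_mem _ _, hlev s hs⟩
  exact union_subset (insert_subset (himage hproj) subset_union_left) himage

lemma flatBd_union_flatInt : χ.flatBd X ∪ χ.flatInt X =
    C.int ∪ {y | y ∈ C.compl ∧ 0 ≤ χ.level X y} := by
  ext y
  simp only [flatBd, flatInt, mem_union, mem_ofPred_eq, le_iff_lt_or_eq, eq_comm (a := (0 : ℝ))]
  tauto

lemma carrier_union_eq (hn : 2 ≤ n) : C.int ∪ {y | y ∈ C.compl ∧ 0 ≤ χ.level X y} =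
    C.carrier ∪ {y | y ∈ C.compl ∧ 0 ≤ χ.level X y} := by
  rw [carrier, union_comm C.bd, union_assoc]
  congr 1
  refine (union_eq_self_of_subset_left fun y hy => show y ∈ C.compl ∧ 0 ≤ χ.level X y from
    ⟨C.bd_subset_compl hy, ?_⟩).symm
  rw [χ.level_of_mem_bd hn hy]; exact depth_nonneg y

lemma isClosed_flat (hn : 2 ≤ n) : IsClosed (χ.flatBd X ∪ χ.flatInt X) := by
  rw [flatBd_union_flatInt, carrier_union_eq χ hn]
  exact C.isCompact_carrier.isClosed.union
    (C.isCompact_compl.isClosed.inter (isClosed_le continuous_const χ.continuous_level))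

lemma exists_isOpen_flatInt : ∃ O : Set (Amb n), IsOpen O ∧ O ∩ Sph n = χ.flatInt X := by
  refine ⟨({y | y ∈ C.compl ∧ χ.level X y ≤ 0})ᶜ, ?_, ?_⟩
  · exact (C.isCompact_compl.isClosed.inter
      (isClosed_le χ.continuous_level continuous_const)).isOpen_compl
  · ext y
    simp only [mem_inter_iff, mem_compl_iff, mem_ofPred_eq, flatInt, mem_union, compl, mem_sdiff]
    constructor
    · rintro ⟨h1, h2⟩
      by_cases hU : y ∈ C.int
      · exact Or.inl hU
      · exact Or.inr ⟨⟨h2, hU⟩, not_le.1 fun h => h1 ⟨⟨h2, hU⟩, h⟩⟩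
    · rintro (h | h)
      · exact ⟨fun h' => h'.1.2 h, C.int_subset_sphere h⟩
      · exact ⟨fun h' => h.2.not_ge h'.2, h.1.1⟩

lemma flatInt_component (hn : 2 ≤ n) : ∃ x, x ∈ Sph n \ χ.flatBd X ∧
    χ.flatInt X = connectedComponentIn (Sph n \ χ.flatBd X) x := by
  obtain ⟨x₀, hx₀⟩ := C.isConnected_int.nonempty
  have hx : x₀ ∈ χ.flatInt X := Or.inl hx₀
  refine ⟨x₀, χ.flatInt_subset_diff hx, Subset.antisymm
    ((χ.isPreconnected_flatInt hn).subset_connectedComponentIn hx χ.flatInt_subset_diff) ?_⟩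
  obtain ⟨O, hO, hOint⟩ := χ.exists_isOpen_flatInt (X := X)
  set Z := connectedComponentIn (Sph n \ χ.flatBd X) x₀ with hZ
  have hZsub : Z ⊆ Sph n \ χ.flatBd X := connectedComponentIn_subset _ _
  have hxZ : x₀ ∈ Z := mem_connectedComponentIn (χ.flatInt_subset_diff hx)
  intro y hy
  by_contra hyint
  have hcover : Z ⊆ O ∪ (χ.flatBd X ∪ χ.flatInt X)ᶜ := by
    intro z hz
    by_cases h : z ∈ χ.flatInt X
    · rw [← hOint] at h; exact Or.inl h.1
    · exact Or.inr (by simp [h, (hZsub hz).2])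
  obtain ⟨z, hz, hzO, hz'⟩ := isPreconnected_connectedComponentIn O _ hO
    (χ.isClosed_flat (X := X) hn).isOpen_compl hcover ⟨x₀, hxZ, by rw [← hOint] at hx; exact hx.1⟩
    ⟨y, hy, by simp [hyint, (hZsub hy).2]⟩
  exact hz' (Or.inr (hOint ▸ ⟨hzO, (hZsub hz).1⟩))

lemma half_le_one_sub_depth {x : Amb n} (hx : x ∈ Sph n) : 1 / 2 ≤ 1 - depth X x := by
  linarith [depth_le_quarter (X := X) hx]

lemma continuous_radial_depth : Continuous fun x => χ.radial x (1 - depth X x) :=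
  χ.continuous_radial.comp (continuous_id.prodMk (continuous_const.sub continuous_depth))

lemma radial_depth_mem (hn : 2 ≤ n) {x : Amb n} (hx : x ∈ C.bd) :
    χ.radial x (1 - depth X x) ∈ χ.flatBd X := by
  refine ⟨χ.radial_mem _ _, ?_⟩
  rw [χ.level_radial hn hx (half_le_one_sub_depth (C.bd_subset_sphere hx))
    (by linarith [depth_nonneg (X := X) x])]
  ring

lemma proj_radial_depth (hn : 2 ≤ n) {x : Amb n} (hx : x ∈ C.bd) :
    χ.proj (χ.radial x (1 - depth X x)) = x :=
  χ.proj_radial hn hx (half_le_one_sub_depth (C.bd_subset_sphere hx))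
    (by linarith [depth_nonneg (X := X) x])

lemma radial_depth_proj {y : Amb n} (hy : y ∈ χ.flatBd X) :
    χ.radial (χ.proj y) (1 - depth X (χ.proj y)) = y := by
  have h : 1 - depth X (χ.proj y) = χ.radius y := by
    have := hy.2
    rw [level] at this; linarith
  rw [h, χ.radial_proj hy.1 (χ.half_le_radius hy.2.ge)]

/-- The boundary of a crumpled cube is homeomorphic to the boundary of its flattening by sliding
along the radii of the complementary cell. -/
def flatHomeo (hn : 2 ≤ n) (X : Set (Amb n)) : ↥C.bd ≃ₜ ↥(χ.flatBd X) where
  toFun x := ⟨χ.radial x (1 - depth X x), χ.radial_depth_mem hn x.2⟩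
  invFun y := ⟨χ.proj y, χ.proj_mem_bd (χ.half_le_radius y.2.2.ge)⟩
  left_inv x := Subtype.ext (χ.proj_radial_depth hn x.2)
  right_inv y := Subtype.ext (χ.radial_depth_proj y.2)
  continuous_toFun := (χ.continuous_radial_depth.comp continuous_subtype_val).subtype_mk _
  continuous_invFun := (χ.continuous_proj.comp continuous_subtype_val).subtype_mk _

/-- The flattening of a closed cell complement relative to `X`. -/
def flattening (hn : 2 ≤ n) (X : Set (Amb n)) : CrumpledCube n where
  bd := χ.flatBd X
  int := χ.flatInt X
  bd_subset_sphere := fun _ hy => hy.1.1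
  exists_embedding := by
    obtain ⟨e, he, hinj, hr⟩ := C.exists_embedding
    have hmem : ∀ p, e p ∈ C.bd := fun p => hr ▸ mem_range_self p
    refine ⟨fun p => χ.flatHomeo hn X ⟨e p, hmem p⟩, ?_, ?_, ?_⟩
    · exact continuous_subtype_val.comp
        ((χ.flatHomeo hn X).continuous.comp (he.subtype_mk hmem))
    · intro p q hpq
      exact hinj (congrArg Subtype.val ((χ.flatHomeo hn X).injective (Subtype.ext hpq)))
    · refine Subset.antisymm ?_ fun y hy => ?_
      · rintro _ ⟨p, rfl⟩
        exact (χ.flatHomeo hn X ⟨e p, hmem p⟩).2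
      · obtain ⟨⟨x, hx⟩, hxy⟩ := (χ.flatHomeo hn X).surjective ⟨y, hy⟩
        obtain ⟨p, rfl⟩ := hr.symm ▸ hx
        exact ⟨p, congrArg Subtype.val hxy⟩
  int_component := χ.flatInt_component hn

end CrumpledCube.ComplChart

/-! ### The collar and the deformation retraction of a flattening -/

universe u v in
/-- Gluing two continuous maps along closed sets, followed by a Tietze extension. -/
lemma exists_continuousMap_eqOn_eqOn {α : Type u} {β : Type v} [TopologicalSpace α] [NormalSpace α]
    [TopologicalSpace β] [TietzeExtension.{u, v} β] {A B : Set α}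
    (hA : IsClosed A) (hB : IsClosed B)
    {f g : α → β} (hf : ContinuousOn f A) (hg : ContinuousOn g B) (h : EqOn f g (A ∩ B)) :
    ∃ H : C(α, β), EqOn H f A ∧ EqOn H g B := by
  classical
  let k : α → β := fun x => if x ∈ A then f x else g x
  have hkA : EqOn k f A := fun x hx => if_pos hx
  have hkB : EqOn k g B := fun x hx => by
    by_cases hxA : x ∈ A
    · rw [hkA hxA, h ⟨hxA, hx⟩]
    · exact if_neg hxA
  have hk : ContinuousOn k (A ∪ B) :=
    (hf.congr hkA).union_of_isClosed (hg.congr hkB) hA hB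
  obtain ⟨H, hH⟩ := ContinuousMap.exists_restrict_eq (hA.union hB)
    (⟨fun x => k x, hk.domRestrict⟩ : C(↥(A ∪ B), β))
  have hHk : EqOn H k (A ∪ B) := fun x hx =>
    congrArg (fun h : C(↥(A ∪ B), β) => h ⟨x, hx⟩) hH
  exact ⟨H, (hHk.mono subset_union_left).trans hkA, (hHk.mono subset_union_right).trans hkB⟩

namespace CrumpledCube.ComplChart

variable {n : ℕ} {C : CrumpledCube n} (χ : C.ComplChart) {X : Set (Amb n)}

lemma mem_carrier_flattening (hn : 2 ≤ n) {y : Amb n} : y ∈ (χ.flattening hn X).carrier ↔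
    y ∈ C.carrier ∨ y ∈ C.compl ∧ 0 ≤ χ.level X y := by
  change y ∈ χ.flatBd X ∪ χ.flatInt X ↔ _
  rw [flatBd_union_flatInt, carrier_union_eq χ hn]
  rfl

lemma mem_compl_of_notMem_carrier (hn : 2 ≤ n) {y : Amb n}
    (hy : y ∈ (χ.flattening hn X).carrier) (hyC : y ∉ C.carrier) :
    y ∈ C.compl ∧ 0 ≤ χ.level X y :=
  ((χ.mem_carrier_flattening hn).1 hy).resolve_left hyC

lemma radius_lt_one {y : Amb n} (hy : y ∈ C.compl) (hyC : y ∉ C.carrier) : χ.radius y < 1 :=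
  (χ.radius_le_one hy).lt_of_ne fun h => hyC (Or.inl (χ.mem_bd_of_radius_eq hy h))

lemma locallyCollaredAt_flattening (hn : 2 ≤ n) (hX : IsClosed X) {p : Amb n}
    (hp : p ∈ (χ.flattening hn X).bd) (hpX : p ∉ X) :
    LocallyCollaredAt (χ.flattening hn X)
      ⟨p, (χ.flattening hn X).bd_subset_carrier hp⟩ := by
  set D := χ.flattening hn X
  let N : Set ↥D.carrier := {y | (y : Amb n) ∉ C.carrier}
  have hcompl : ∀ y : ↥N, ((y : ↥D.carrier) : Amb n) ∈ C.compl := fun y =>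
    (χ.mem_compl_of_notMem_carrier hn y.1.2 y.2).1
  have hlevel : ∀ y : ↥N, 0 ≤ χ.level X ((y : ↥D.carrier) : Amb n) := fun y =>
    (χ.mem_compl_of_notMem_carrier hn y.1.2 y.2).2
  have hradius : ∀ y : ↥N, χ.radius ((y : ↥D.carrier) : Amb n) < 1 := fun y =>
    χ.radius_lt_one (hcompl y) y.2
  have hproj : ∀ y : ↥N, χ.proj ((y : ↥D.carrier) : Amb n) ∈ C.bd := fun y =>
    χ.proj_mem_bd (χ.half_le_radius (hlevel y))
  have hlt : ∀ y : ↥N, χ.level X ((y : ↥D.carrier) : Amb n) <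
      depth X (χ.proj ((y : ↥D.carrier) : Amb n)) := fun y => by
    have := hradius y
    rw [level]; linarith
  have hpos : ∀ y : ↥N, 0 < depth X (χ.proj ((y : ↥D.carrier) : Amb n)) := fun y =>
    (hlevel y).trans_lt (hlt y)
  have hmem : ∀ x ∈ C.bd, ∀ s, 1 - depth X x ≤ s → s < 1 →
      ∃ h : χ.radial x s ∈ D.carrier, (⟨χ.radial x s, h⟩ : ↥D.carrier) ∈ N := by
    intro x hx s hs hs1
    have hs2 := (half_le_one_sub_depth (X := X) (C.bd_subset_sphere hx)).trans hs
    refine ⟨(χ.mem_carrier_flattening hn).2 (Or.inr ⟨χ.radial_mem _ _, ?_⟩), fun h => ?_⟩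
    · rw [χ.level_radial hn hx hs2 hs1.le]; linarith
    · have h1 := χ.radius_of_mem_bd hn
        (C.mem_bd_of_mem_carrier_of_mem_compl h (χ.radial_mem _ _))
      rw [χ.radius_radial hn hx (one_half_pos.le.trans hs2) hs1.le] at h1
      exact hs1.ne h1
  have hstep : ∀ d t : ℝ, 0 < d → t ∈ Ico (0 : ℝ) 1 →
      1 - d ≤ 1 - (1 - t) * d ∧ 1 - (1 - t) * d < 1 := fun d t hd ht => by
    constructor <;> nlinarith [ht.1, ht.2, mul_pos (sub_pos.2 ht.2) hd, mul_nonneg ht.1 hd.le]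
  have hmem₁ : ∀ y : ↥N, ∃ h : χ.radial (χ.proj ((y : ↥D.carrier) : Amb n))
      (1 - depth X (χ.proj ((y : ↥D.carrier) : Amb n))) ∈ D.carrier,
      (⟨_, h⟩ : ↥D.carrier) ∈ N := fun y =>
    hmem _ (hproj y) _ le_rfl (by linarith [hpos y])
  have hmem₂ : ∀ q : ↥(N ∩ {x : ↥D.carrier | (x : Amb n) ∈ D.bd}) × ↥(Ico (0 : ℝ) 1),
      ∃ h : χ.radial (χ.proj (q.1 : ↥D.carrier))
        (1 - (1 - (q.2 : ℝ)) * depth X (χ.proj (q.1 : ↥D.carrier))) ∈ D.carrier,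
      (⟨_, h⟩ : ↥D.carrier) ∈ N := fun q =>
    have h := hstep _ _ (hpos ⟨q.1, q.1.2.1⟩) q.2.2
    hmem _ (hproj ⟨q.1, q.1.2.1⟩) _ h.1 h.2
  have hcoe : Continuous fun y : ↥N => ((y : ↥D.carrier) : Amb n) := by fun_prop
  have hcoe' : Continuous fun q : ↥(N ∩ {x : ↥D.carrier | (x : Amb n) ∈ D.bd}) × ↥(Ico (0 : ℝ) 1)
      => ((q.1 : ↥D.carrier) : Amb n) := by fun_prop
  refine ⟨N, ?_, ?_, ⟨⟨⟨fun y => ⟨⟨⟨_, (hmem₁ y).1⟩, (hmem₁ y).2, χ.radial_depth_mem hn (hproj y)⟩,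
      ⟨χ.level X ((y : ↥D.carrier) : Amb n) / depth X (χ.proj ((y : ↥D.carrier) : Amb n)),
        div_nonneg (hlevel y) (hpos y).le, (div_lt_one (hpos y)).2 (hlt y)⟩⟩,
      fun q => ⟨⟨_, (hmem₂ q).1⟩, (hmem₂ q).2⟩, ?_, ?_⟩, ?_, ?_⟩, ?_⟩⟩
  · exact (C.isCompact_carrier.isClosed.preimage continuous_subtype_val).isOpen_compl
  · intro h
    have hb := C.mem_bd_of_mem_carrier_of_mem_compl h hp.1
    have h0 := χ.level_of_mem_bd (X := X) hn hb
    rw [hp.2] at h0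
    exact (depth_pos hX (C.bd_subset_sphere hb) hpX).ne h0
  · intro y
    refine Subtype.ext (Subtype.ext ?_)
    change χ.radial (χ.proj (χ.radial _ _)) (1 - (1 - _) * depth X (χ.proj (χ.radial _ _))) = _
    rw [χ.proj_radial_depth hn (hproj y), sub_mul, div_mul_cancel₀ _ (hpos y).ne', one_mul, level,
      sub_add_eq_sub_sub]
    ring_nf
    exact χ.radial_proj (hcompl y) (χ.half_le_radius (hlevel y))
  · rintro ⟨q, t⟩
    have h := hstep _ _ (hpos ⟨q, q.2.1⟩) t.2
    have hb := hproj ⟨q, q.2.1⟩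
    have hs := (half_le_one_sub_depth (X := X) (C.bd_subset_sphere hb)).trans h.1
    have hpr := χ.proj_radial hn hb hs h.2.le
    have hlv := χ.level_radial (X := X) hn hb hs h.2.le
    refine Prod.ext (Subtype.ext (Subtype.ext ?_)) (Subtype.ext ?_)
    · change χ.radial (χ.proj (χ.radial _ _)) (1 - depth X (χ.proj (χ.radial _ _))) = _
      rw [hpr]
      exact χ.radial_depth_proj q.2.2
    · change χ.level X (χ.radial _ _) / depth X (χ.proj (χ.radial _ _)) = _
      rw [hpr, hlv, div_eq_iff (hpos ⟨q, q.2.1⟩).ne']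
      ring
  · refine Continuous.prodMk (Continuous.subtype_mk (Continuous.subtype_mk
      (χ.continuous_radial_depth.comp (χ.continuous_proj.comp hcoe)) _) _)
      (Continuous.subtype_mk ?_ _)
    exact (χ.continuous_level.comp hcoe).div
      (continuous_depth.comp (χ.continuous_proj.comp hcoe)) fun y => (hpos y).ne'
  · refine Continuous.subtype_mk (Continuous.subtype_mk ?_ _) _
    have hpc := χ.continuous_proj.comp hcoe'
    exact χ.continuous_radial.comp (hpc.prodMk (continuous_const.sub
      ((continuous_const.sub (continuous_subtype_val.comp continuous_snd)).mul
        (continuous_depth.comp hpc))))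
  · intro y hy
    refine Prod.ext (Subtype.ext (Subtype.ext ?_)) (Subtype.ext ?_)
    · exact χ.radial_depth_proj hy
    · change χ.level X _ / _ = 0
      rw [hy.2, zero_div]

/-- A continuous map on the ambient space which deforms the complementary cell radially onto its
boundary, fixing the crumpled cube. -/
lemma exists_deformation (hn : 2 ≤ n) : ∃ F : C(Amb n × ℝ, Amb n),
    (∀ y ∈ C.carrier, ∀ t, F (y, t) = y) ∧
    ∀ y ∈ C.compl, ∀ t, F (y, t) = χ.radial (χ.proj y) (1 - (1 - t) * (1 - χ.radius y)) := by
  have hg : Continuous fun p : Amb n × ℝ =>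
      χ.radial (χ.proj p.1) (1 - (1 - p.2) * (1 - χ.radius p.1)) :=
    χ.continuous_radial.comp ((χ.continuous_proj.comp continuous_fst).prodMk
      (continuous_const.sub ((continuous_const.sub continuous_snd).mul
        (continuous_const.sub (χ.continuous_radius.comp continuous_fst)))))
  have heq : EqOn (fun p : Amb n × ℝ => p.1)
      (fun p => χ.radial (χ.proj p.1) (1 - (1 - p.2) * (1 - χ.radius p.1)))
      (C.carrier ×ˢ univ ∩ C.compl ×ˢ univ) := by
    rintro ⟨y, t⟩ ⟨⟨h1, -⟩, ⟨h2, -⟩⟩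
    have hb := C.mem_bd_of_mem_carrier_of_mem_compl h1 h2
    simp only [χ.proj_of_mem_bd hn hb, χ.radius_of_mem_bd hn hb, sub_self, mul_zero, sub_zero,
      χ.radial_one h2]
  obtain ⟨F, hF, hF'⟩ := exists_continuousMap_eqOn_eqOn
    (C.isCompact_carrier.isClosed.prod isClosed_univ)
    (C.isCompact_compl.isClosed.prod isClosed_univ)
    continuous_fst.continuousOn hg.continuousOn heq
  exact ⟨F, fun y hy t => hF ⟨hy, trivial⟩, fun y hy t => hF' ⟨hy, trivial⟩⟩

end CrumpledCube.ComplChart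

/-! ### A map onto the flattening -/

lemma continuousAt_smul_of_norm_le_one {α E : Type*} [TopologicalSpace α] [NormedAddCommGroup E]
    [NormedSpace ℝ E] {a : α → ℝ} {u : α → E} {x : α} (hu : ContinuousAt u x)
    (ha : ∀ z, ‖a z‖ ≤ 1) (h : u x = 0 ∨ ContinuousAt a x) :
    ContinuousAt (fun z => a z • u z) x := by
  rcases h with h | h
  · have h0 : Filter.Tendsto u (nhds x) (nhds 0) := h ▸ hu
    have h1 : Filter.Tendsto (fun z => a z • u z) (nhds x) (nhds 0) := by
      refine squeeze_zero_norm (fun z => ?_) (tendsto_zero_iff_norm_tendsto_zero.1 h0)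
      rw [norm_smul]
      exact mul_le_of_le_one_left (norm_nonneg _) (ha z)
    rw [ContinuousAt, h, smul_zero]
    exact h1
  · exact h.smul hu

namespace CrumpledCube.ComplChart

variable {n : ℕ} {C : CrumpledCube n} (χ : C.ComplChart) {X : Set (Amb n)}

/-- A retraction of the sphere minus a ball in the complementary cell to the crumpled cube,
extended to the ambient space, together with a function measuring the depth in the cell. -/
lemma exists_retraction (χ : C.ComplChart) (hn : 2 ≤ n) : ∃ (R : Amb n → Amb n) (e : Amb n → ℝ),
    Continuous R ∧ Continuous e ∧ (∀ y ∈ C.carrier, R y = y ∧ e y = 0) ∧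
    ∀ y ∈ C.compl, |e y| ≤ 1 / 2 → R y ∈ C.bd := by
  obtain ⟨F, hF, hF'⟩ := χ.exists_deformation hn
  have heq : EqOn (fun _ : Amb n => (0 : ℝ)) (fun y => 1 - χ.radius y) (C.carrier ∩ C.compl) :=
    fun y hy => by
      have := χ.radius_of_mem_bd hn (C.mem_bd_of_mem_carrier_of_mem_compl hy.1 hy.2)
      simp [this]
  obtain ⟨e, he, he'⟩ := exists_continuousMap_eqOn_eqOn C.isCompact_carrier.isClosed
    C.isCompact_compl.isClosed continuousOn_const
    (continuous_const.sub χ.continuous_radius).continuousOn heq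
  refine ⟨fun y => F (y, 1), e, by fun_prop, e.continuous, fun y hy => ⟨hF y hy 1, he hy⟩,
    fun y hy h => ?_⟩
  have hey : e y = 1 - χ.radius y := he' hy
  rw [hey] at h
  have hb := χ.proj_mem_bd (by linarith [(abs_le.1 h).2] : 1 / 2 ≤ χ.radius y)
  change F (y, 1) ∈ C.bd
  rw [hF' y hy]
  simpa [χ.radial_one (C.bd_subset_compl hb)] using hb

/-- A controlled way of pushing points of the crumpled cube near the boundary to the boundary. -/
lemma exists_push (χ : C.ComplChart) (hn : 2 ≤ n) : ∃ (Q g : Amb n → Amb n) (b : Amb n → ℝ),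
    Continuous Q ∧ Continuous g ∧ Continuous b ∧ (∀ x, 0 ≤ b x) ∧
    (∀ x ∈ C.bd, g x = x ∧ b x = 0) ∧ (∀ x ∈ C.carrier, Q x = x) ∧
    (∀ x ∈ C.carrier, b x ≤ 1 / 2 → ∀ t ∈ Icc (0 : ℝ) 1,
      Q (x + t • (g x - x)) ∈ C.carrier ∧ dist (Q (x + t • (g x - x))) x ≤ b x) ∧
    ∀ x ∈ C.carrier, b x ≤ 1 / 2 → Q (g x) ∈ C.bd := by
  obtain ⟨R, e, hR, he, hC, hK⟩ := χ.exists_retraction hn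
  let g : Amb n → Amb n := fun x => χ.ofBall (χ.toBall x)
  have hg : Continuous g := χ.continuous_ofBall.comp χ.continuous_toBall
  have hgK : ∀ x, g x ∈ C.compl := fun x => χ.ofBall_mem _
  let p : Amb n → ℝ → Amb n := fun x t => unitize (x + t • (g x - x))
  have hp : Continuous fun z : Amb n × ℝ => p z.1 z.2 :=
    continuous_unitize.comp (by fun_prop)
  let q : Amb n → ℝ → ℝ := fun x t => dist (R (p x t)) x + |e (p x t)|
  have hq : Continuous ↿q := by
    change Continuous fun z : Amb n × ℝ => dist (R (p z.1 z.2)) z.1 + |e (p z.1 z.2)|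
    exact ((hR.comp hp).dist continuous_fst).add (he.comp hp).abs
  let m : Amb n → ℝ := fun x => sSup (q x '' Icc 0 1)
  have hm : Continuous m := isCompact_Icc.continuous_sSup hq
  have hqm : ∀ x, ∀ t ∈ Icc (0 : ℝ) 1, q x t ≤ m x := fun x t ht =>
    le_csSup (isCompact_Icc.image (hq.comp (Continuous.prodMk_right x))).bddAbove
      (mem_image_of_mem _ ht)
  have hq0 : ∀ x t, 0 ≤ q x t := fun x t => add_nonneg dist_nonneg (abs_nonneg _)
  have hm0 : ∀ x, 0 ≤ m x := fun x => (hq0 x 0).trans (hqm x 0 (by simp))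
  have hsph : ∀ x ∈ Sph n, unitize x = x := fun x hx =>
    unitize_of_norm_eq_one (mem_sphere_zero_iff_norm.1 hx)
  have hpS : ∀ x ∈ C.carrier, ‖g x - x‖ ≤ 1 / 2 → ∀ t ∈ Icc (0 : ℝ) 1, p x t ∈ Sph n := by
    intro x hx hgx t ht
    refine mem_sphere_zero_iff_norm.2 (norm_unitize ?_)
    have h1 : ‖x‖ = 1 := mem_sphere_zero_iff_norm.1 (C.carrier_subset_sphere hx)
    have h2 : ‖t • (g x - x)‖ ≤ 1 / 2 := by
      rw [norm_smul, Real.norm_of_nonneg ht.1]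
      exact (mul_le_of_le_one_left (norm_nonneg _) ht.2).trans hgx
    have h3 := norm_sub_le (x + t • (g x - x)) (t • (g x - x))
    rw [add_sub_cancel_right, h1] at h3
    linarith
  refine ⟨fun x => R (unitize x), g, fun x => ‖g x - x‖ + m x, hR.comp continuous_unitize, hg,
    (hg.sub continuous_id).norm.add hm, fun x => add_nonneg (norm_nonneg _) (hm0 x), ?_, ?_, ?_, ?_⟩
  · intro x hx
    have hgx : g x = x := χ.ofBall_toBall x (C.bd_subset_compl hx)
    refine ⟨hgx, ?_⟩
    have hqx : ∀ t, q x t = 0 := fun t => by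
      have hpx : p x t = x := by
        change unitize (x + t • (g x - x)) = x
        rw [hgx, sub_self, smul_zero, add_zero, hsph x (C.bd_subset_sphere hx)]
      change dist (R (p x t)) x + |e (p x t)| = 0
      obtain ⟨h1, h2⟩ := hC x (Or.inl hx)
      rw [hpx, h1, h2, dist_self, abs_zero, add_zero]
    have hmx : m x = 0 := le_antisymm
      (csSup_le ((nonempty_Icc.2 zero_le_one).image _) (by rintro _ ⟨t, -, rfl⟩; exact (hqx t).le))
      (hm0 x)
    change ‖g x - x‖ + m x = 0
    rw [hgx, sub_self, norm_zero, hmx, add_zero]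
  · intro x hx
    change R (unitize x) = x
    rw [hsph x (C.carrier_subset_sphere hx), (hC x hx).1]
  · intro x hx hb t ht
    have hqt : dist (R (p x t)) x + |e (p x t)| ≤ m x := hqm x t ht
    have hS := hpS x hx (by linarith [hm0 x]) t ht
    have h1 := norm_nonneg (g x - x)
    have h2 := abs_nonneg (e (p x t))
    have h3 : 0 ≤ dist (R (p x t)) x := dist_nonneg
    refine ⟨?_, ?_⟩
    · rcases C.mem_carrier_or_mem_compl hS with h | h
      · change R (p x t) ∈ _
        rw [(hC _ h).1]; exact h
      · exact Or.inl (hK _ h (by linarith))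
    · change dist (R (p x t)) x ≤ _
      linarith
  · intro x hx hb
    have hqt : dist (R (p x 1)) x + |e (p x 1)| ≤ m x := hqm x 1 (by simp)
    have hp1 : p x 1 = g x := by
      change unitize (x + (1 : ℝ) • (g x - x)) = g x
      rw [one_smul, add_sub_cancel, hsph _ (hgK x).1]
    rw [hp1] at hqt
    change R (unitize (g x)) ∈ C.bd
    rw [hsph _ (hgK x).1]
    have h3 : 0 ≤ dist (R (g x)) x := dist_nonneg
    exact hK _ (hgK x) (by linarith [norm_nonneg (g x - x)])

lemma exists_radial_extension : ∃ P : C(Amb n × ℝ, Amb n),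
    (∀ y ∈ C.carrier, P (y, 0) = y) ∧ ∀ y ∈ C.bd, ∀ w, P (y, w) = χ.radial y (1 - w) := by
  have hg : Continuous fun p : Amb n × ℝ => χ.radial p.1 (1 - p.2) :=
    χ.continuous_radial.comp (continuous_fst.prodMk (continuous_const.sub continuous_snd))
  have heq : EqOn (fun p : Amb n × ℝ => p.1) (fun p => χ.radial p.1 (1 - p.2))
      (C.carrier ×ˢ {0} ∩ C.bd ×ˢ univ) := by
    rintro ⟨y, w⟩ ⟨⟨-, rfl⟩, ⟨h, -⟩⟩
    simp only [sub_zero, χ.radial_one (C.bd_subset_compl h)]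
  obtain ⟨P, hP, hP'⟩ := exists_continuousMap_eqOn_eqOn
    (C.isCompact_carrier.isClosed.prod isClosed_singleton)
    (C.isCompact_bd.isClosed.prod isClosed_univ) continuous_fst.continuousOn hg.continuousOn heq
  exact ⟨P, fun y hy => hP ⟨hy, rfl⟩, fun y hy w => hP' ⟨hy, trivial⟩⟩

lemma exists_map_to_flattening (hn : 2 ≤ n) (hX : IsClosed X) (hXb : X ⊆ C.bd) :
    ∃ f : Amb n → Amb n, ContinuousOn f C.carrier ∧
      (∀ x ∈ C.bd, f x = χ.radial x (1 - depth X x)) ∧ ∀ x ∈ C.int, f x ∈ χ.flatInt X := by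
  obtain ⟨Q, g, b, hQ, hg, hb, hb0, hbd, hQC, hpush, hpush'⟩ := χ.exists_push hn
  obtain ⟨P, hP, hP'⟩ := χ.exists_radial_extension
  have hbdne : C.bd.Nonempty := by
    obtain ⟨e, -, -, hr⟩ := C.exists_embedding
    have : Nonempty ↥(Sph (n - 1)) := (NormedSpace.sphere_nonempty.2 zero_le_one).to_subtype
    exact hr ▸ range_nonempty e
  have hquot : ∀ x, 0 ≤ (b x + infDist x C.bd) / depth X x := fun x =>
    div_nonneg (add_nonneg (hb0 x) infDist_nonneg) (depth_nonneg x)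
  let a : Amb n → ℝ := fun x => max 0 (2 - (b x + infDist x C.bd) / depth X x)
  have ha0 : ∀ x, 0 ≤ a x := fun x => le_max_left _ _
  have ha2 : ∀ x, a x ≤ 2 := fun x => max_le zero_le_two (by linarith [hquot x])
  have hac : ∀ x ∈ C.carrier, x ∉ X → ContinuousAt a x := fun x hx hxX =>
    continuousAt_const.max (continuousAt_const.sub
      ((hb.add (continuous_infDist_pt _)).continuousAt.div continuous_depth.continuousAt
        (depth_pos hX (C.carrier_subset_sphere hx) hxX).ne'))
  let y : Amb n → Amb n := fun x => Q (x + min (a x) 1 • (g x - x))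
  let w : Amb n → ℝ := fun x => max (a x - 1) 0 * depth X (y x)
  have ht : ∀ x, min (a x) 1 ∈ Icc (0 : ℝ) 1 := fun x =>
    ⟨le_min (ha0 x) zero_le_one, min_le_right _ _⟩
  have hybd : ∀ x ∈ C.bd, y x = x := fun x hx => by
    change Q (x + min (a x) 1 • (g x - x)) = x
    rw [(hbd x hx).1, sub_self, smul_zero, add_zero, hQC x (Or.inl hx)]
  have hyc : ∀ x ∈ C.carrier, ContinuousAt y x := fun x hx => by
    refine hQ.continuousAt.comp (continuousAt_id.add (continuousAt_smul_of_norm_le_one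
      (hg.sub continuous_id).continuousAt (fun z => ?_) ?_))
    · rw [Real.norm_of_nonneg (ht z).1]; exact (ht z).2
    · by_cases hxX : x ∈ X
      · exact Or.inl (by simp [(hbd x (hXb hxX)).1])
      · exact Or.inr ((hac x hx hxX).min continuousAt_const)
  have hwc : ∀ x ∈ C.carrier, ContinuousAt w x := fun x hx => by
    refine continuousAt_smul_of_norm_le_one
      (continuous_depth.continuousAt.comp (hyc x hx)) (fun z => ?_) ?_
    · rw [Real.norm_of_nonneg (le_max_right _ _)]
      exact max_le (by linarith [ha2 z]) zero_le_one
    · by_cases hxX : x ∈ X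
      · exact Or.inl (by simp [hybd x (hXb hxX), depth_of_mem hxX])
      · exact Or.inr (((hac x hx hxX).sub continuousAt_const).max continuousAt_const)
  refine ⟨fun x => P (y x, w x), fun x hx =>
    (P.continuous.continuousAt.comp ((hyc x hx).prodMk (hwc x hx))).continuousWithinAt, ?_, ?_⟩
  · intro x hx
    have ha : a x = 2 := by
      change max 0 (2 - (b x + infDist x C.bd) / depth X x) = 2
      rw [(hbd x hx).2, infDist_zero_of_mem hx, add_zero, zero_div, sub_zero,
        max_eq_right zero_le_two]
    have hw : w x = depth X x := by
      change max (a x - 1) 0 * depth X (y x) = _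
      rw [ha, hybd x hx]; norm_num
    change P (y x, w x) = _
    rw [hw, hybd x hx, hP' x hx]
  · intro x hx
    change P (y x, w x) ∈ _
    have hxC : x ∈ C.carrier := Or.inr hx
    have hxb := C.notMem_bd_of_mem_int hx
    have hd := depth_pos hX (C.int_subset_sphere hx) fun h => hxb (hXb h)
    have hdist : 0 < infDist x C.bd :=
      (C.isCompact_bd.isClosed.notMem_iff_infDist_pos hbdne).1 hxb
    rcases (ha0 x).eq_or_lt with ha | ha
    · have hy : y x = x := by
        change Q (x + min (a x) 1 • (g x - x)) = x
        rw [← ha, min_eq_left zero_le_one, zero_smul, add_zero, hQC x hxC]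
      have hw : w x = 0 := by
        change max (a x - 1) 0 * depth X (y x) = _
        rw [← ha]; norm_num
      rw [hy, hw, hP x hxC]
      exact Or.inl hx
    · have ha' : 0 < 2 - (b x + infDist x C.bd) / depth X x := by
        simpa [a] using ha
      have haeq : a x = 2 - (b x + infDist x C.bd) / depth X x := max_eq_right ha'.le
      have hblt : b x < 2 * depth X x := by
        have := (div_lt_iff₀ hd).1 (sub_pos.1 ha')
        linarith
      have hbhalf : b x ≤ 1 / 2 := by
        linarith [depth_le_quarter (X := X) (C.int_subset_sphere hx)]
      obtain ⟨hyC, hyd⟩ := hpush x hxC hbhalf _ (ht x)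
      change y x ∈ C.carrier at hyC
      change dist (y x) x ≤ b x at hyd
      have hyX : y x ∉ X := fun h => by
        have := four_mul_depth_le_dist (x := x) h
        rw [dist_comm] at this
        linarith
      have hdy := depth_pos hX (C.carrier_subset_sphere hyC) hyX
      rcases le_or_gt (a x) 1 with h1 | h1
      · have hw : w x = 0 := by
          change max (a x - 1) 0 * depth X (y x) = _
          rw [max_eq_right (by linarith), zero_mul]
        rw [hw, hP _ hyC]
        rcases hyC with h | h
        · exact Or.inr ⟨C.bd_subset_compl h, by rwa [χ.level_of_mem_bd hn h]⟩
        · exact Or.inl h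
      · have hw : w x = (a x - 1) * depth X (y x) := by
          change max (a x - 1) 0 * depth X (y x) = _
          rw [max_eq_left (by linarith)]
        have hyb : y x ∈ C.bd := by
          have : y x = Q (g x) := by
            change Q (x + min (a x) 1 • (g x - x)) = _
            rw [min_eq_right h1.le, one_smul, add_sub_cancel]
          rw [this]
          exact hpush' x hxC hbhalf
        have ha2' : a x < 2 := by
          rw [haeq]
          linarith [div_pos (add_pos_of_nonneg_of_pos (hb0 x) hdist) hd]
        have hwd : w x < depth X (y x) := by
          rw [hw]; nlinarith
        have hw0 : 0 ≤ w x := by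
          rw [hw]; exact mul_nonneg (by linarith) hdy.le
        have hdq := depth_le_quarter (X := X) (C.bd_subset_sphere hyb)
        rw [hP' _ hyb]
        refine Or.inr ⟨χ.radial_mem _ _, ?_⟩
        rw [χ.level_radial hn hyb (by linarith) (by linarith)]
        linarith

lemma memW_flattening (hn : 2 ≤ n) (hX : IsClosed X) (hXb : X ⊆ C.bd) :
    MemW C (χ.flattening hn X) (χ.flatHomeo hn X) := by
  obtain ⟨f, hf, hfb, hfi⟩ := χ.exists_map_to_flattening hn hX hXb
  have hmem : ∀ x : ↥C.carrier, f x ∈ (χ.flattening hn X).carrier := by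
    rintro ⟨x, hx | hx⟩
    · exact Or.inl (hfb x hx ▸ χ.radial_depth_mem hn hx)
    · exact Or.inr (hfi x hx)
  refine ⟨fun x => ⟨f x, hmem x⟩, hf.domRestrict.subtype_mk _, fun x hx => hfb x hx, fun x => ?_⟩
  refine ⟨fun h => x.2.resolve_right fun hx => (χ.flatInt_subset_diff (hfi x hx)).2 h, fun hx => ?_⟩
  exact (hfb x hx ▸ χ.radial_depth_mem hn hx : f x ∈ χ.flatBd X)

end CrumpledCube.ComplChart

/-! ### Flattenings are standard -/

namespace CrumpledCube.ComplChart

variable {n : ℕ} {C : CrumpledCube n} (χ : C.ComplChart) {X : Set (Amb n)}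

lemma isStandardFlattening (hn : 2 ≤ n) (hX : IsClosed X) (hXb : X ⊆ C.bd) :
    IsStandardFlattening C X (χ.flattening hn X) (χ.flatHomeo hn X) := by
  obtain ⟨F, hF, hF'⟩ := χ.exists_deformation hn
  set D := χ.flattening hn X with hD
  have hCD : C.carrier ⊆ D.carrier := fun y hy => (χ.mem_carrier_flattening hn).2 (Or.inl hy)
  have hmem : ∀ (y : ↥D.carrier) (t : I), F (y, t) ∈ D.carrier := by
    rintro ⟨y, hy⟩ ⟨t, ht⟩
    rcases (χ.mem_carrier_flattening hn).1 hy with h | ⟨hK, hl⟩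
    · rw [hF y h]; exact hy
    · have hr := χ.half_le_radius hl
      have hr1 := χ.radius_le_one hK
      have h0 : 0 ≤ (1 - t) * (1 - χ.radius y) :=
        mul_nonneg (by linarith [ht.2]) (by linarith)
      have h1 : (1 - t) * (1 - χ.radius y) ≤ 1 - χ.radius y :=
        mul_le_of_le_one_left (by linarith) (by linarith [ht.1])
      refine (χ.mem_carrier_flattening hn).2 (Or.inr ?_)
      rw [hF' y hK]
      refine ⟨χ.radial_mem _ _, ?_⟩
      rw [χ.level_radial hn (χ.proj_mem_bd hr) (by linarith) (by linarith)]
      rw [level] at hl; linarith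
  have hone : ∀ y ∈ C.compl, 0 ≤ χ.level X y → F (y, 1) = χ.proj y := fun y hK hl => by
    rw [hF' y hK, sub_self, zero_mul, sub_zero,
      χ.radial_one (C.bd_subset_compl (χ.proj_mem_bd (χ.half_le_radius hl)))]
  have hone_bd : ∀ y ∈ C.compl, 0 ≤ χ.level X y → F (y, 1) ∈ C.bd := fun y hK hl => by
    rw [hone y hK hl]; exact χ.proj_mem_bd (χ.half_le_radius hl)
  have hone_X : ∀ y ∈ D.carrier, F (y, 1) ∈ X → y = F (y, 1) := fun y hy hyX => by
    rcases (χ.mem_carrier_flattening hn).1 hy with h | ⟨hK, hl⟩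
    · exact (hF y h 1).symm
    · rw [hone y hK hl] at hyX ⊢
      have hr1 : χ.radius y = 1 := by
        refine le_antisymm (χ.radius_le_one hK) ?_
        rw [level, depth_of_mem hyX] at hl; linarith
      exact (χ.proj_of_mem_bd hn (χ.mem_bd_of_radius_eq hK hr1)).symm
  have hone_int : ∀ y ∈ D.carrier, F (y, 1) ∉ C.bd → y = F (y, 1) := fun y hy hyb => by
    rcases (χ.mem_carrier_flattening hn).1 hy with h | ⟨hK, hl⟩
    · exact (hF y h 1).symm
    · exact absurd (hone_bd y hK hl) hyb
  refine ⟨χ.memW_flattening hn hX hXb, fun x hx => ?_, hCD, fun p hp hpX =>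
    χ.locallyCollaredAt_flattening hn hX hp hpX,
    fun y => ⟨F (y, ((1 : I) : ℝ)), hmem y 1⟩, ?_, fun y => ?_, fun y hy => ?_,
    ⟨⟨fun p => ⟨F (p.1, (p.2 : ℝ)), hmem p.1 p.2⟩, ?_⟩, fun y => ?_, fun y => rfl,
      fun y t hy => ?_⟩, fun x hb => ?_, ?_⟩
  · change χ.radial x (1 - depth X x) = x
    rw [depth_of_mem hx, sub_zero, χ.radial_one (C.bd_subset_compl x.2)]
  · exact (F.continuous.comp (continuous_subtype_val.prodMk continuous_const)).subtype_mk _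
  · change F (y, 1) ∈ C.carrier
    rcases (χ.mem_carrier_flattening hn).1 y.2 with h | ⟨hK, hl⟩
    · rw [hF y h]; exact h
    · exact Or.inl (hone_bd y hK hl)
  · exact Subtype.ext (hF y hy 1)
  · exact (F.continuous.comp ((continuous_subtype_val.comp continuous_fst).prodMk
      (continuous_subtype_val.comp continuous_snd))).subtype_mk _
  · refine Subtype.ext ?_
    change F (y, 0) = y
    rcases (χ.mem_carrier_flattening hn).1 y.2 with h | ⟨hK, hl⟩
    · exact hF y h 0
    · rw [hF' y hK, sub_zero, one_mul, sub_sub_cancel, χ.radial_proj hK (χ.half_le_radius hl)]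
  · exact Subtype.ext (hF y hy t)
  · change F (χ.radial x (1 - depth X x), 1) = x
    have h := χ.radial_depth_mem (X := X) hn x.2
    rw [hone _ h.1 h.2.ge, χ.proj_radial_depth hn x.2]
  · rintro y ⟨y', hne, heq⟩
    replace heq : F (y', 1) = F (y, 1) := congrArg Subtype.val heq
    change F (y, 1) ∈ C.bd \ X
    refine ⟨?_, fun hyX => ?_⟩
    · by_contra hyb
      exact hne (Subtype.ext ((hone_int y' y'.2 (heq ▸ hyb)).trans
        (heq.trans (hone_int y y.2 hyb).symm)))
    · exact hne (Subtype.ext ((hone_X y' y'.2 (heq ▸ hyX)).trans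
        (heq.trans (hone_X y y.2 hyX).symm)))

end CrumpledCube.ComplChart

/-- **Existence of standard flattenings (Section 5).** For every closed
`n`-cell-complement `C` and every closed subset `X ⊆ Bd C`, a standard flattening of `C`
relative to `X` exists. -/
theorem stmt10 (n : ℕ) (hn : 2 ≤ n) (C : CrumpledCube n) (hC : IsClosedCellComplement C)
    (X : Set (Amb n)) (hXc : IsClosed X) (hXb : X ⊆ C.bd) :
    ∃ (CX : CrumpledCube n) (hX : ↥C.bd ≃ₜ ↥CX.bd), IsStandardFlattening C X CX hX := by
  obtain ⟨χ⟩ := hC.nonempty_complChart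
  exact ⟨χ.flattening hn X, χ.flatHomeo hn X, χ.isStandardFlattening hn hXc hXb⟩
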